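/- Let ρ₀ : Γ → PSL(2,ℝ) be convex cocompact with limit set L, let h be a homeomorphism of S¹ equal to the identity on L with ρ₁ = h ρ₀ h⁻¹ taking values in Diff(S¹), and let ω₂ be a smooth volume form on C such that the invariance identity ω₂(ρ₁(γ)(x), ρ₁(γ)(y))·ρ₁(γ)'(x)·ρ₁(γ)'(y) = ω₂(x,y) holds for every γ ∈ Γ and every (x,y) ∈ (L×S¹ ∪ S¹×L) \ Δ. Let I be a connected component of S¹ \ L with closure Ī and let γ ∈ Γ generate the stabilizer of I. Then there exists a smooth volume form ω on Ī×S¹ \ Δ that is invariant under ρ₁(γ) and coincides with ω₂ at all points of (L×S¹ ∪ S¹×L) ∩ (Ī×S¹ \ Δ). -/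

import Mathlib

/-!
The form produced here is defined and invariant on the whole cylinder, and is then restricted to
the strip over the closure of `I`.

Let `f = ρ₁ γ₀` with `γ₀ ≠ 1`. The gap `I` is an open arc with end points `a, b ∈ L`
(`exists_gap`, `component_subset`), and `f` preserves `{a, b}` (`endpoints_fix_or_swap`). A swap is
impossible: `f` would have a fixed point in the arc, whereas an element of `PSL(2,ℝ)` exchanging two
points is an elliptic involution (`mobius_swap_no_fixed`). So `f` fixes `a` and `b`, and invariance
of `ω₂` at `(a, b)` gives `f'(a) f'(b) = 1`. The density `ω₂(a, ·)` defines an affine coordinate on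
`S¹ \ {a}` in which `f` is the homothety of ratio `f'(b)` (`FixPair.chart`); if this ratio were `1`
then `f` would be the identity. Exchanging `a` and `b` if needed, `μ = f'(b) < 1`.

Searching for the form as `ω₂ · exp σ`, the function `σ` has to satisfy `σ ∘ (f × f) = σ + φ`, where
`φ` is smooth off the diagonal and vanishes as soon as one of its arguments is in `L`. With a cutoff
`θ` equal to `1` near `a` and `0` near `b`, the piece `θ(y) φ(x, y)` is summed over forward orbits of
`f × f`, and the piece `(1 - θ(y)) φ(x, y)` over backward orbits (`half_solution`,
`exists_form_of_lt`). The forward sum is locally finite away from `y = a`. Near a point `(x, a)`, in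
the affine coordinates on `S¹ \ {a}` for `x` and on `S¹ \ {b}` for `y`, the map `f × f` is the
linear saddle `(u, v) ↦ (μ u, μ⁻¹ v)`. Since `L` has no isolated point, `φ` vanishes to infinite order at `u = 0`
(where `x = b`), which beats the growth of the derivatives along the expanding direction:
the series converges with all its derivatives (`saddle_series`). All terms vanish over `L`, hence
`ω₂` is unchanged there.
-/

noncomputable section

open Real Set Function MeasureTheory
open scoped Classical

/-- The circle, modeled as the real projective line `ℝP¹`. -/
abbrev RP1 : Type := Projectivization ℝ (Fin 2 → ℝ)

instance : TopologicalSpace RP1 :=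
  inferInstanceAs (TopologicalSpace (Quotient (projectivizationSetoid ℝ (Fin 2 → ℝ))))

instance : MeasurableSpace RP1 := borel RP1
instance : BorelSpace RP1 := ⟨rfl⟩

lemma cossin_ne_zero (t : ℝ) : ![Real.cos (π * t), Real.sin (π * t)] ≠ 0 := by
  intro h
  have h0 : Real.cos (π * t) = 0 := by simpa using congrFun h 0
  have h1 : Real.sin (π * t) = 0 := by simpa using congrFun h 1
  have h2 := Real.sin_sq_add_cos_sq (π * t)
  rw [h0, h1] at h2
  norm_num at h2

/-- The standard (angular) parametrization `ℝ → ℝP¹`; it has period `1` and realizes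
the identification `S¹ = ℝ/ℤ ≃ ℝP¹`. -/
def para (t : ℝ) : RP1 :=
  Projectivization.mk ℝ ![Real.cos (π * t), Real.sin (π * t)] (cossin_ne_zero t)

/-- `F : ℝ → ℝ` is a lift of the circle map `f` through the angular parametrization. -/
def IsLift (F : ℝ → ℝ) (f : RP1 → RP1) : Prop :=
  ∀ t : ℝ, f (para t) = para (F t)

/-- `f` is a `C^k` diffeomorphism of the circle: it admits a `C^k` lift of degree `±1`
with nowhere vanishing derivative. -/
def IsCircleDiffeo (k : ℕ∞) (f : RP1 → RP1) : Prop :=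
  ∃ F : ℝ → ℝ, IsLift F f ∧ ContDiff ℝ k F ∧ (∀ t : ℝ, deriv F t ≠ 0) ∧
    ((∀ t : ℝ, F (t + 1) = F t + 1) ∨ (∀ t : ℝ, F (t + 1) = F t - 1))

/-- `f` is a real-analytic diffeomorphism of the circle. -/
def IsAnalyticCircleDiffeo (f : RP1 → RP1) : Prop :=
  ∃ F : ℝ → ℝ, IsLift F f ∧ AnalyticOnNhd ℝ F Set.univ ∧ (∀ t : ℝ, deriv F t ≠ 0) ∧
    ((∀ t : ℝ, F (t + 1) = F t + 1) ∨ (∀ t : ℝ, F (t + 1) = F t - 1))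

/-- The derivative of a circle map at a point, computed in the angular coordinate via a
differentiable lift. (Any two differentiable lifts differ by an integer constant, and the
derivative of a lift is `1`-periodic, so this does not depend on any choice.) -/
def circleDeriv (f : RP1 → RP1) (x : RP1) : ℝ :=
  if h : ∃ F : ℝ → ℝ, IsLift F f ∧ Differentiable ℝ F
  then deriv h.choose (Function.invFun para x) else 0

/-- The `n`-th derivative of a smooth circle map at a point, in the angular coordinate. -/
def circleDerivN (n : ℕ) (f : RP1 → RP1) (x : RP1) : ℝ :=
  if h : ∃ F : ℝ → ℝ, IsLift F f ∧ ContDiff ℝ (⊤ : ℕ∞) F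
  then iteratedDeriv n h.choose (Function.invFun para x) else 0

/-- The expression of a function on `S¹ × S¹` in the angular coordinates. -/
def chartDensity (ω : RP1 → RP1 → ℝ) : ℝ × ℝ → ℝ := fun q => ω (para q.1) (para q.2)

/-- The lift to `ℝ × ℝ` of the complement of the diagonal in `S¹ × S¹`. -/
def offDiag2 : Set (ℝ × ℝ) := {q : ℝ × ℝ | para q.1 ≠ para q.2}

/-- A `C^k` volume form on the cylinder `C = S¹ × S¹ \ Δ`: a positive function of class
`C^k` (in the angular coordinates) off the diagonal. -/
def IsVolumeForm (k : ℕ∞) (ω : RP1 → RP1 → ℝ) : Prop :=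
  (∀ x y : RP1, x ≠ y → 0 < ω x y) ∧ ContDiffOn ℝ k (chartDensity ω) offDiag2

/-- A real-analytic volume form on the cylinder `C = S¹ × S¹ \ Δ`. -/
def IsAnalyticVolumeForm (ω : RP1 → RP1 → ℝ) : Prop :=
  (∀ x y : RP1, x ≠ y → 0 < ω x y) ∧ AnalyticOnNhd ℝ (chartDensity ω) offDiag2

/-- The circle diffeomorphism `f` preserves the volume form `ω` on the cylinder:
`ω (f x) (f y) · f'(x) · f'(y) = ω x y` for all `x ≠ y`. -/
def PreservesForm (f : RP1 → RP1) (ω : RP1 → RP1 → ℝ) : Prop :=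
  ∀ x y : RP1, x ≠ y →
    ω (f x) (f y) * circleDeriv f x * circleDeriv f y = ω x y

abbrev SL2 : Type := Matrix.SpecialLinearGroup (Fin 2) ℝ

/-- The projective action of `SL(2,ℝ)` on `ℝP¹`; its image in the maps of `ℝP¹`
is the group `PSL(2,ℝ)`. -/
def mobius (M : SL2) : RP1 → RP1 :=
  Projectivization.map (Matrix.SpecialLinearGroup.toLin' M : (Fin 2 → ℝ) →ₗ[ℝ] Fin 2 → ℝ)
    (Matrix.SpecialLinearGroup.toLin' M).injective

/-- `f` is an element of `PSL(2,ℝ)`, viewed as a self-map of the circle `ℝP¹`. -/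
def IsMobius (f : RP1 → RP1) : Prop := ∃ M : SL2, f = mobius M

lemma rot_det (α : ℝ) :
    Matrix.det !![Real.cos (π * α), -Real.sin (π * α); Real.sin (π * α), Real.cos (π * α)] = 1 := by
  rw [Matrix.det_fin_two_of]
  nlinarith [Real.sin_sq_add_cos_sq (π * α)]

/-- The rotation of angle `α` (in the angular coordinate of total length `1`), as an
element of `SL(2,ℝ)`: `mobius (rotSL α)` is the rotation `para t ↦ para (t + α)`. -/
def rotSL (α : ℝ) : SL2 :=
  ⟨!![Real.cos (π * α), -Real.sin (π * α); Real.sin (π * α), Real.cos (π * α)], rot_det α⟩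

section Reps

variable {Γ : Type*} [Group Γ]

/-- The action `ρ` has no finite orbit on the circle. -/
def HasNoFiniteOrbit (ρ : Γ →* Equiv.Perm RP1) : Prop :=
  ∀ x : RP1, (Set.range fun γ : Γ => ρ γ x).Infinite

/-- The action `ρ` has a dense orbit on the circle. -/
def HasDenseOrbit (ρ : Γ →* Equiv.Perm RP1) : Prop :=
  ∃ x : RP1, Dense (Set.range fun γ : Γ => ρ γ x)

/-- `L` is the limit set of the action `ρ`: the minimal nonempty closed invariant subset. -/
def IsLimitSet (ρ : Γ →* Equiv.Perm RP1) (L : Set RP1) : Prop :=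
  L.Nonempty ∧ IsClosed L ∧ (∀ γ : Γ, (ρ γ) '' L = L) ∧
    ∀ L' : Set RP1, L'.Nonempty → IsClosed L' → (∀ γ : Γ, (ρ γ) '' L' = L') → L ⊆ L'

/-- `ρ` is area-preserving: the diagonal action on the cylinder preserves a smooth
volume form. -/
def AreaPreserving (ρ : Γ →* Equiv.Perm RP1) : Prop :=
  ∃ ω : RP1 → RP1 → ℝ, IsVolumeForm (⊤ : ℕ∞) ω ∧ ∀ γ : Γ, PreservesForm (ρ γ) ω

/-- `ρ` is topologically Fuchsian: conjugate to a subgroup of `PSL(2,ℝ)` by a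
homeomorphism of the circle. -/
def TopologicallyFuchsian (ρ : Γ →* Equiv.Perm RP1) : Prop :=
  ∃ h : RP1 ≃ₜ RP1, ∀ γ : Γ, IsMobius fun x => h.symm (ρ γ (h x))

/-- `ρ` is differentially Fuchsian: conjugate to a subgroup of `PSL(2,ℝ)` by a `C^∞`
diffeomorphism of the circle. -/
def DifferentiallyFuchsian (ρ : Γ →* Equiv.Perm RP1) : Prop :=
  ∃ h g : RP1 → RP1, IsCircleDiffeo (⊤ : ℕ∞) h ∧ IsCircleDiffeo (⊤ : ℕ∞) g ∧
    (∀ x, g (h x) = x) ∧ (∀ x, h (g x) = x) ∧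
    ∀ γ : Γ, IsMobius fun x => g (ρ γ (h x))

/-- `ρ` is analytically Fuchsian: conjugate to a subgroup of `PSL(2,ℝ)` by a real-analytic
diffeomorphism of the circle. -/
def AnalyticallyFuchsian (ρ : Γ →* Equiv.Perm RP1) : Prop :=
  ∃ h g : RP1 → RP1, IsAnalyticCircleDiffeo h ∧ IsAnalyticCircleDiffeo g ∧
    (∀ x, g (h x) = x) ∧ (∀ x, h (g x) = x) ∧
    ∀ γ : Γ, IsMobius fun x => g (ρ γ (h x))

end Reps

/-- The "Lebesgue" measure on the circle, transported from `[0,1)` by the angular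
parametrization. -/
def circleMeasure : Measure RP1 :=
  Measure.map para (volume.restrict (Set.Ico (0 : ℝ) 1))

/-- The measure on `S¹ × S¹` with density `ω` with respect to Lebesgue measure. -/
def volumeFormMeasure (ω : RP1 → RP1 → ℝ) : Measure (RP1 × RP1) :=
  (circleMeasure.prod circleMeasure).withDensity fun q => ENNReal.ofReal (ω q.1 q.2)

-- extras appended to base
section Extra

open scoped UpperHalfPlane

/-- The affine chart `ℝ → ℝP¹`, `u ↦ [u : 1]`, realizing `S¹ = ℝ ∪ {∞}`. -/
def aff (u : ℝ) : RP1 :=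
  Projectivization.mk ℝ ![u, (1 : ℝ)] (by
    intro h
    simpa using congrFun h 1)

/-- The curvature `K = (2/ω) ∂²(log ω)/∂x∂y` (in the angular coordinates) of the Lorentz
metric associated to the volume form `ω` on the cylinder. -/
def curvature (ω : RP1 → RP1 → ℝ) (x y : RP1) : ℝ :=
  (2 / ω x y) *
    deriv (fun t : ℝ =>
        deriv (fun s : ℝ => Real.log (ω (para t) (para s))) (Function.invFun para y))
      (Function.invFun para x)

/-- The Schwarzian derivative of `f` (with respect to the standard projective structure of
`ℝP¹`) vanishes at `x`: `f` agrees to third order at `x` with some element of `PSL(2,ℝ)`. -/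
def SchwarzianVanishesAt (f : RP1 → RP1) (x : RP1) : Prop :=
  ∃ M : SL2, f x = mobius M x ∧
    circleDerivN 1 f x = circleDerivN 1 (mobius M) x ∧
    circleDerivN 2 f x = circleDerivN 2 (mobius M) x ∧
    circleDerivN 3 f x = circleDerivN 3 (mobius M) x

/-- The action on the hyperbolic plane of an element of `PSL(2,ℝ)`, given as a self-map of
the circle. (Well defined: matrices `±M` induce the same map on `ℝP¹` and on `ℍ`.) -/
def mobiusHAct (f : RP1 → RP1) : ℍ → ℍ :=
  if h : ∃ M : SL2, f = mobius M then fun z => h.choose • z else id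

/-- A subset of the hyperbolic plane is (geodesically) convex iff it contains every point
lying between two of its points. -/
def HypConvex (C : Set ℍ) : Prop :=
  ∀ x ∈ C, ∀ y ∈ C, ∀ z : ℍ, dist x z + dist z y = dist x y → z ∈ C

/-- A Cantor subset of the circle: nonempty, perfect, with empty interior. -/
def IsCantorSet (L : Set RP1) : Prop :=
  L.Nonempty ∧ Perfect L ∧ interior L = ∅

/-- `ρ` is a convex cocompact representation in `PSL(2,ℝ)`: it is injective, takes values in
`PSL(2,ℝ)`, is discrete (acts properly discontinuously on `ℍ`), its limit set is a Cantor
set, and it acts cocompactly on some nonempty closed convex invariant subset of `ℍ`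
(equivalently, on the convex hull of its limit set). -/
def IsConvexCocompact {Γ : Type*} [Group Γ] (ρ : Γ →* Equiv.Perm RP1) : Prop :=
  Function.Injective ρ ∧ (∀ γ : Γ, IsMobius (ρ γ)) ∧
  (∀ K : Set ℍ, IsCompact K →
    {γ : Γ | ((mobiusHAct (ρ γ) '' K) ∩ K).Nonempty}.Finite) ∧
  (∃ L : Set RP1, IsLimitSet ρ L) ∧
  (∀ L : Set RP1, IsLimitSet ρ L → IsCantorSet L) ∧
  ∃ C : Set ℍ, C.Nonempty ∧ IsClosed C ∧ HypConvex C ∧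
    (∀ γ : Γ, mobiusHAct (ρ γ) '' C = C) ∧
    ∃ K : Set ℍ, IsCompact K ∧ C ⊆ ⋃ γ : Γ, mobiusHAct (ρ γ) '' K

/-- Two circle maps are `ε`-close in the `C¹` topology. -/
def C1Close (f g : RP1 → RP1) (ε : ℝ) : Prop :=
  ∃ F G : ℝ → ℝ, IsLift F f ∧ IsLift G g ∧ ContDiff ℝ 1 F ∧ ContDiff ℝ 1 G ∧
    ∀ t : ℝ, |F t - G t| ≤ ε ∧ |deriv F t - deriv G t| ≤ ε

/-- `ρ` is spectrally Möbius-like: every nontrivial element has at most two fixed points,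
and at a pair of fixed points `N, S` the derivatives satisfy `f'(N)·f'(S) = 1`, `f'(N) ≠ 1`. -/
def SpectrallyMobiusLike {Γ : Type*} [Group Γ] (ρ : Γ →* Equiv.Perm RP1) : Prop :=
  ∀ γ : Γ, ρ γ ≠ 1 →
    {x : RP1 | ρ γ x = x}.encard ≤ 2 ∧
    ∀ N S : RP1, N ≠ S → {x : RP1 | ρ γ x = x} = {N, S} →
      circleDeriv (ρ γ) N * circleDeriv (ρ γ) S = 1 ∧ circleDeriv (ρ γ) N ≠ 1

end Extra

/-! ### The circle `ℝP¹` and its angular parametrization -/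

lemma para_eq_iff {s t : ℝ} : para s = para t ↔ ∃ k : ℤ, s = t + k := by
  unfold para
  rw [Projectivization.mk_eq_mk_iff]
  constructor
  · rintro ⟨a, ha⟩
    have h0 : (a : ℝ) * cos (π * t) = cos (π * s) := by
      simpa [Units.smul_def] using congrFun ha 0
    have h1 : (a : ℝ) * sin (π * t) = sin (π * s) := by
      simpa [Units.smul_def] using congrFun ha 1
    have : sin (π * s - π * t) = 0 := by
      rw [sin_sub, ← h0, ← h1]; ring
    obtain ⟨n, hn⟩ := sin_eq_zero_iff.1 this
    refine ⟨n, ?_⟩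
    have hpi := pi_pos
    have : π * (n - (s - t)) = 0 := by linarith
    rcases mul_eq_zero.1 this with h | h <;> linarith
  · rintro ⟨k, rfl⟩
    refine ⟨(-1) ^ k, ?_⟩
    have e : π * (t + k) = π * t + k * π := by ring
    ext i
    fin_cases i <;> simp [Units.smul_def, e, cos_add_int_mul_pi, sin_add_int_mul_pi]

lemma para_add_int (t : ℝ) (k : ℤ) : para (t + k) = para t := para_eq_iff.2 ⟨k, rfl⟩

lemma para_add_one (t : ℝ) : para (t + 1) = para t := by simpa using para_add_int t 1

lemma para_sub_one (t : ℝ) : para (t - 1) = para t := by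
  simpa [sub_eq_add_neg] using para_add_int t (-1)

lemma continuous_para : Continuous para := by
  have : Continuous fun t : ℝ =>
      (⟨![cos (π * t), sin (π * t)], cossin_ne_zero t⟩ : {v : Fin 2 → ℝ // v ≠ 0}) := by
    refine Continuous.subtype_mk ?_ _
    refine continuous_pi fun i => ?_
    fin_cases i <;> simp <;> fun_prop
  exact continuous_quotient_mk'.comp this

lemma para_surjective : Surjective para := by
  intro x
  induction x using Projectivization.ind with
  | h v hv =>
    let z : ℂ := ⟨v 0, v 1⟩
    have hz : z ≠ 0 := by
      intro h
      apply hv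
      ext i
      fin_cases i
      · exact congrArg Complex.re h
      · exact congrArg Complex.im h
    refine ⟨Complex.arg z / π, ?_⟩
    unfold para
    rw [Projectivization.mk_eq_mk_iff]
    have hn : ‖z‖ ≠ 0 := norm_ne_zero_iff.2 hz
    refine ⟨(Units.mk0 ‖z‖ hn)⁻¹, ?_⟩
    ext i
    fin_cases i
    · simp [Units.smul_def, Complex.cos_arg hz, z, div_eq_inv_mul]
    · simp [Units.smul_def, Complex.sin_arg, z, div_eq_inv_mul]

/-- The map `[x : y] ↦ (x + iy)² / |x + iy|²`, which embeds `ℝP¹` in the plane. -/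
def dblMap : RP1 → ℝ × ℝ :=
  Projectivization.lift
    (fun v : {v : Fin 2 → ℝ // v ≠ 0} =>
      ((v.1 0 ^ 2 - v.1 1 ^ 2) / (v.1 0 ^ 2 + v.1 1 ^ 2),
        2 * v.1 0 * v.1 1 / (v.1 0 ^ 2 + v.1 1 ^ 2)))
    (by
      rintro ⟨a, ha⟩ ⟨b, hb⟩ t (rfl : a = t • b)
      have ht : t ≠ 0 := by rintro rfl; simp at ha
      have hb' : b 0 ^ 2 + b 1 ^ 2 ≠ 0 := by
        intro h
        apply hb
        ext i
        fin_cases i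
        · simpa using show b 0 = 0 by nlinarith [sq_nonneg (b 0), sq_nonneg (b 1)]
        · simpa using show b 1 = 0 by nlinarith [sq_nonneg (b 0), sq_nonneg (b 1)]
      have hden : (t * b 0) ^ 2 + (t * b 1) ^ 2 = t ^ 2 * (b 0 ^ 2 + b 1 ^ 2) := by ring
      simp only [Pi.smul_apply, smul_eq_mul, hden]
      ext <;> simp only <;> field_simp)

lemma dblMap_para (t : ℝ) : dblMap (para t) = (cos (2 * (π * t)), sin (2 * (π * t))) := by
  have h := cos_sq_add_sin_sq (π * t)
  unfold dblMap para
  rw [Projectivization.lift_mk]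
  simp [h, sin_two_mul, cos_two_mul']
  ring

lemma continuous_dblMap : Continuous dblMap := by
  have hne : ∀ v : {v : Fin 2 → ℝ // v ≠ 0}, v.1 0 ^ 2 + v.1 1 ^ 2 ≠ 0 := by
    rintro ⟨b, hb⟩ h
    apply hb
    simp only at h
    ext i
    fin_cases i
    · simpa using show b 0 = 0 by nlinarith [sq_nonneg (b 0), sq_nonneg (b 1)]
    · simpa using show b 1 = 0 by nlinarith [sq_nonneg (b 0), sq_nonneg (b 1)]
  refine Continuous.quotient_lift ?_ _
  have h0 : Continuous fun v : {v : Fin 2 → ℝ // v ≠ 0} => v.1 0 :=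
    (continuous_apply 0).comp continuous_subtype_val
  have h1 : Continuous fun v : {v : Fin 2 → ℝ // v ≠ 0} => v.1 1 :=
    (continuous_apply 1).comp continuous_subtype_val
  have hden := (h0.pow 2).add (h1.pow 2)
  exact (((h0.pow 2).sub (h1.pow 2)).div hden hne).prodMk
    (((continuous_const.mul h0).mul h1).div hden hne)

lemma dblMap_injective : Injective dblMap := by
  intro x y h
  obtain ⟨s, rfl⟩ := para_surjective x
  obtain ⟨t, rfl⟩ := para_surjective y
  rw [dblMap_para, dblMap_para, Prod.mk.injEq] at h
  have h1 : cos (2 * (π * s) - 2 * (π * t)) = 1 := by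
    rw [cos_sub, h.1, h.2]; nlinarith [sin_sq_add_cos_sq (2 * (π * t))]
  obtain ⟨n, hn⟩ := (cos_eq_one_iff _).1 h1
  refine para_eq_iff.2 ⟨n, ?_⟩
  have hpi := pi_pos
  have : π * (n - (s - t)) = 0 := by linarith
  rcases mul_eq_zero.1 this with h | h <;> linarith

instance : T2Space RP1 := T2Space.of_injective_continuous dblMap_injective continuous_dblMap

/-- The identification `ℝ/ℤ ≃ ℝP¹`. -/
def circleEquiv : AddCircle (1 : ℝ) ≃ RP1 :=
  Equiv.ofBijective
    (Quotient.lift para (by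
      intro s t h
      obtain ⟨k, hk⟩ := QuotientAddGroup.leftRel_apply.1 h
      refine para_eq_iff.2 ⟨-k, ?_⟩
      simp at hk
      push_cast
      linarith))
    (by
      constructor
      · intro x y
        induction x using QuotientAddGroup.induction_on with | H s => ?_
        induction y using QuotientAddGroup.induction_on with | H t => ?_
        intro h
        obtain ⟨k, hk⟩ := para_eq_iff.1 (show para s = para t from h)
        rw [hk]
        simp
      · intro x
        obtain ⟨t, rfl⟩ := para_surjective x
        exact ⟨(t : AddCircle (1 : ℝ)), rfl⟩)

lemma isOpenMap_para : IsOpenMap para := by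
  have : Fact ((0 : ℝ) < 1) := ⟨one_pos⟩
  have hc : Continuous circleEquiv := Continuous.quotient_lift continuous_para _
  have ho : IsOpenMap circleEquiv := (hc.homeoOfEquivCompactToT2).isOpenMap
  exact ho.comp QuotientAddGroup.isOpenMap_coe

/-! ### Lifts of circle maps -/

/-- Two continuous functions which agree modulo `ℤ` differ by a constant integer. -/
lemma exists_int_const {F G : ℝ → ℝ} (hF : Continuous F) (hG : Continuous G)
    (h : ∀ t, para (F t) = para (G t)) : ∃ k : ℤ, ∀ t, F t = G t + k := by
  choose m hm using fun t => para_eq_iff.1 (h t)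
  have hc : Continuous fun t => (m t : ℝ) := by
    have : (fun t => (m t : ℝ)) = fun t => F t - G t := by
      ext t; rw [hm t]; ring
    rw [this]; fun_prop
  have hc' : Continuous m := Int.isClosedEmbedding_coe_real.isEmbedding.continuous_iff.2 hc
  refine ⟨m 0, fun t => ?_⟩
  rw [hm t, (PreconnectedSpace.constant inferInstance hc' : m t = m 0)]

lemma circleDeriv_para {f : RP1 → RP1} {F : ℝ → ℝ} (hF : IsLift F f) (hd : Differentiable ℝ F)
    (hdeg : (∀ t : ℝ, F (t + 1) = F t + 1) ∨ (∀ t : ℝ, F (t + 1) = F t - 1)) (t : ℝ) :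
    circleDeriv f (para t) = deriv F t := by
  have hex : ∃ F : ℝ → ℝ, IsLift F f ∧ Differentiable ℝ F := ⟨F, hF, hd⟩
  unfold circleDeriv
  rw [dif_pos hex]
  obtain ⟨hG, hGd⟩ := hex.choose_spec
  obtain ⟨k, hk⟩ := exists_int_const hGd.continuous hd.continuous
    (fun t => by rw [← hF t, hG t])
  have h1 : deriv hex.choose = deriv F := by
    rw [show hex.choose = fun t => F t + k from funext hk]
    ext t; simp
  have hper : Periodic (deriv F) 1 := by
    intro s
    rw [← deriv_comp_add_const]
    rcases hdeg with h | h <;> simp [h]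
  obtain ⟨m, hm⟩ := para_eq_iff.1 (Function.invFun_eq (para_surjective (para t)))
  rw [h1, hm]
  simpa using hper.int_mul m t

/-! ### Projective transformations -/

lemma mobius_mk (M : SL2) (v : Fin 2 → ℝ) (hv : v ≠ 0) :
    ∃ hw : M.1.mulVec v ≠ 0, mobius M (Projectivization.mk ℝ v hv) =
      Projectivization.mk ℝ (M.1.mulVec v) hw := by
  refine ⟨?_, ?_⟩
  · exact fun h => hv ((Matrix.SpecialLinearGroup.toLin' M).injective
      (by rw [map_zero]; exact h))
  · rfl

/-- Two vectors of distinct projective classes span the plane. -/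
lemma exists_coords {u v : Fin 2 → ℝ} {hu : u ≠ 0} {hv : v ≠ 0}
    (h : Projectivization.mk ℝ u hu ≠ Projectivization.mk ℝ v hv) :
    u 0 * v 1 - u 1 * v 0 ≠ 0 ∧ ∀ w : Fin 2 → ℝ, ∃ p q : ℝ, w = p • u + q • v := by
  have hd : u 0 * v 1 - u 1 * v 0 ≠ 0 := by
    intro hd
    apply h
    rw [Projectivization.mk_eq_mk_iff']
    by_cases h0 : v 0 = 0
    · have h1 : v 1 ≠ 0 := by
        intro h1; apply hv; ext i; fin_cases i <;> simp [h0, h1]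
      refine ⟨u 1 / v 1, ?_⟩
      have : u 0 = 0 := by
        rw [h0] at hd
        have : u 0 * v 1 = 0 := by linarith
        exact (mul_eq_zero.1 this).resolve_right h1
      ext i; fin_cases i <;> simp [h0, this, h1]
    · refine ⟨u 0 / v 0, ?_⟩
      ext i; fin_cases i
      · simp [h0]
      · simp; field_simp; linarith
  refine ⟨hd, fun w => ⟨(w 0 * v 1 - w 1 * v 0) / (u 0 * v 1 - u 1 * v 0),
    (u 0 * w 1 - u 1 * w 0) / (u 0 * v 1 - u 1 * v 0), ?_⟩⟩
  have key : ∀ i, w i = (w 0 * v 1 - w 1 * v 0) / (u 0 * v 1 - u 1 * v 0) * u i +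
      (u 0 * w 1 - u 1 * w 0) / (u 0 * v 1 - u 1 * v 0) * v i := by
    intro i
    rw [div_mul_eq_mul_div, div_mul_eq_mul_div, ← add_div, eq_div_iff hd]
    fin_cases i <;> simp <;> ring
  ext i
  simpa using key i

lemma exists_smul_of_mobius {M : SL2} {u v : Fin 2 → ℝ} {hu : u ≠ 0} {hv : v ≠ 0}
    (h : mobius M (Projectivization.mk ℝ u hu) = Projectivization.mk ℝ v hv) :
    ∃ r : ℝ, M.1.mulVec u = r • v := by
  obtain ⟨hw, e⟩ := mobius_mk M u hu
  rw [e, Projectivization.mk_eq_mk_iff'] at h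
  obtain ⟨r, hr⟩ := h
  exact ⟨r, hr.symm⟩

/-- A projective transformation with three fixed points is the identity. -/
lemma mobius_eq_id_of_three {M : SL2} {a b c : RP1} (hab : a ≠ b) (hac : a ≠ c) (hbc : b ≠ c)
    (ha : mobius M a = a) (hb : mobius M b = b) (hc : mobius M c = c) (x : RP1) :
    mobius M x = x := by
  induction a using Projectivization.ind with | h u hu => ?_
  induction b using Projectivization.ind with | h v hv => ?_
  induction c using Projectivization.ind with | h w hw => ?_
  induction x using Projectivization.ind with | h z hz => ?_
  obtain ⟨r, hr⟩ := exists_smul_of_mobius ha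
  obtain ⟨s, hs⟩ := exists_smul_of_mobius hb
  obtain ⟨t, ht⟩ := exists_smul_of_mobius hc
  obtain ⟨-, hco⟩ := exists_coords hab
  obtain ⟨hd, -⟩ := exists_coords hab
  obtain ⟨hd1, -⟩ := exists_coords hac
  obtain ⟨hd2, -⟩ := exists_coords hbc
  obtain ⟨p, q, rfl⟩ := hco w
  rw [Matrix.mulVec_add, Matrix.mulVec_smul, Matrix.mulVec_smul, hr, hs] at ht
  have e0 := congrFun ht 0
  have e1 := congrFun ht 1
  simp only [Pi.add_apply, Pi.smul_apply, smul_eq_mul] at e0 e1 hd1 hd2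
  have hp : p ≠ 0 := by rintro rfl; apply hd2; ring
  have hq : q ≠ 0 := by rintro rfl; apply hd1; ring
  have hrt : r = t := by
    have : (p * (r - t)) * (u 0 * v 1 - u 1 * v 0) = 0 := by linear_combination v 1 * e0 - v 0 * e1
    rcases mul_eq_zero.1 this with h | h
    · rcases mul_eq_zero.1 h with h | h
      · exact absurd h hp
      · linarith
    · exact absurd h hd
  have hst : s = t := by
    have : (q * (s - t)) * (u 0 * v 1 - u 1 * v 0) = 0 := by linear_combination u 0 * e1 - u 1 * e0
    rcases mul_eq_zero.1 this with h | h
    · rcases mul_eq_zero.1 h with h | h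
      · exact absurd h hq
      · linarith
    · exact absurd h hd
  obtain ⟨hz', ez⟩ := mobius_mk M z hz
  rw [ez, Projectivization.mk_eq_mk_iff']
  refine ⟨t, ?_⟩
  obtain ⟨p', q', rfl⟩ := hco z
  rw [Matrix.mulVec_add, Matrix.mulVec_smul, Matrix.mulVec_smul, hr, hs, hrt, hst]
  ext i
  simp
  ring

/-- A projective transformation of determinant one exchanging two points is an elliptic
involution, hence has no fixed point. -/
lemma mobius_swap_no_fixed {M : SL2} {a b c : RP1} (hab : a ≠ b)
    (ha : mobius M a = b) (hb : mobius M b = a) (hc : mobius M c = c) : False := by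
  induction a using Projectivization.ind with | h u hu => ?_
  induction b using Projectivization.ind with | h v hv => ?_
  induction c using Projectivization.ind with | h w hw => ?_
  obtain ⟨r, hr⟩ := exists_smul_of_mobius ha
  obtain ⟨s, hs⟩ := exists_smul_of_mobius hb
  obtain ⟨t, ht⟩ := exists_smul_of_mobius hc
  obtain ⟨hd, hco⟩ := exists_coords hab
  have hdet : M.1 0 0 * M.1 1 1 - M.1 0 1 * M.1 1 0 = 1 := by
    rw [← Matrix.det_fin_two]; exact M.2
  have r0 := congrFun hr 0
  have r1 := congrFun hr 1
  have s0 := congrFun hs 0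
  have s1 := congrFun hs 1
  simp only [Matrix.mulVec, dotProduct, Fin.sum_univ_two, Pi.smul_apply, smul_eq_mul]
    at r0 r1 s0 s1
  have hrs : r * s = -1 := by
    have : (r * s + 1) * (u 0 * v 1 - u 1 * v 0) = 0 := by
      have e : (M.1 0 0 * u 0 + M.1 0 1 * u 1) * (M.1 1 0 * v 0 + M.1 1 1 * v 1) -
          (M.1 1 0 * u 0 + M.1 1 1 * u 1) * (M.1 0 0 * v 0 + M.1 0 1 * v 1) =
          (M.1 0 0 * M.1 1 1 - M.1 0 1 * M.1 1 0) * (u 0 * v 1 - u 1 * v 0) := by ring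
      rw [r0, r1, s0, s1, hdet] at e
      linarith
    rcases mul_eq_zero.1 this with h | h
    · linarith
    · exact absurd h hd
  obtain ⟨p, q, rfl⟩ := hco w
  have h2 : M.1.mulVec (M.1.mulVec (p • u + q • v)) = -(p • u + q • v) := by
    rw [Matrix.mulVec_add, Matrix.mulVec_smul, Matrix.mulVec_smul, hr, hs, Matrix.mulVec_add,
      Matrix.mulVec_smul, Matrix.mulVec_smul, Matrix.mulVec_smul, Matrix.mulVec_smul, hr, hs]
    ext i
    simp
    linear_combination (p * u i + q * v i) * hrs
  rw [ht, Matrix.mulVec_smul, ht] at h2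
  apply hw
  ext i
  have := congrFun h2 i
  simp only [Pi.smul_apply, Pi.neg_apply, smul_eq_mul] at this
  have h3 : (t * t + 1) * (p • u + q • v) i = 0 := by linarith
  rcases mul_eq_zero.1 h3 with h | h
  · nlinarith [sq_nonneg t]
  · simpa using h

/-! ### Linearizing coordinates -/

/-- If `F` fixes `c` and multiplies the one-form `d(t) dt` by the constant `μ`, then the primitive
of `d` vanishing at `c` is multiplied by `μ` under `F`. -/
lemma exists_linCoord {F d : ℝ → ℝ} {p q c μ : ℝ} (hF : ContDiff ℝ (⊤ : ℕ∞) F)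
    (hd : ContDiffOn ℝ (⊤ : ℕ∞) d (Ioo p q)) (hpos : ∀ t ∈ Ioo p q, 0 < d t)
    (hc : c ∈ Ioo p q) (hFc : F c = c) (hmaps : ∀ t ∈ Ioo p q, F t ∈ Ioo p q)
    (hinv : ∀ t ∈ Ioo p q, d (F t) * deriv F t = μ * d t) :
    ∃ U : ℝ → ℝ, ContDiffOn ℝ (⊤ : ℕ∞) U (Ioo p q) ∧ U c = 0 ∧
      (∀ t ∈ Ioo p q, HasDerivAt U (d t) t) ∧ StrictMonoOn U (Ioo p q) ∧
      ∀ t ∈ Ioo p q, U (F t) = μ * U t := by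
  let U : ℝ → ℝ := fun t => ∫ s in c..t, d s
  have hder : ∀ t ∈ Ioo p q, HasDerivAt U (d t) t := by
    intro t ht
    refine intervalIntegral.integral_hasDerivAt_right ?_ ?_ ?_
    · refine (hd.continuousOn.mono ?_).intervalIntegrable
      exact (ordConnected_Ioo (a := p) (b := q)).uIcc_subset hc ht
    · exact hd.continuousOn.stronglyMeasurableAtFilter isOpen_Ioo t ht
    · exact hd.continuousOn.continuousAt (isOpen_Ioo.mem_nhds ht)
  have hFd : Differentiable ℝ F := hF.differentiable (by simp)
  refine ⟨U, ?_, by simp [U], hder, ?_, ?_⟩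
  · rw [contDiffOn_infty_iff_deriv_of_isOpen isOpen_Ioo]
    refine ⟨fun t ht => (hder t ht).differentiableAt.differentiableWithinAt, ?_⟩
    exact hd.congr fun t ht => (hder t ht).deriv
  · refine strictMonoOn_of_deriv_pos (convex_Ioo p q)
      (fun t ht => (hder t ht).continuousAt.continuousWithinAt) ?_
    rw [interior_Ioo]
    intro t ht
    rw [(hder t ht).deriv]
    exact hpos t ht
  · have hW : ∀ t ∈ Ioo p q, HasDerivAt (fun t => U (F t) - μ * U t) 0 t := by
      intro t ht
      have h1 := (hder _ (hmaps t ht)).comp t (hFd t).hasDerivAt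
      have h2 := h1.sub ((hder t ht).const_mul μ)
      rw [hinv t ht, sub_self] at h2
      exact h2
    intro t ht
    have := isOpen_Ioo.is_const_of_deriv_eq_zero (s := Ioo p q) isPreconnected_Ioo
      (fun t ht => (hW t ht).differentiableAt.differentiableWithinAt)
      (fun t ht => (hW t ht).deriv) ht hc
    simp only [hFc] at this
    have hUc : U c = 0 := by simp [U]
    rw [hUc] at this
    linarith

/-- A smooth parametrization `X` of the interval `(p, p + 1)` by `ℝ`, with smooth inverse `U`,
sending `0` to `c` and conjugating `F` to the multiplication by `μ`. -/
structure LinChart (F : ℝ → ℝ) (p c μ : ℝ) where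
  X : ℝ → ℝ
  U : ℝ → ℝ
  smooth_X : ContDiff ℝ (⊤ : ℕ∞) X
  smooth_U : ContDiffOn ℝ (⊤ : ℕ∞) U (Ioo p (p + 1))
  mem : ∀ u, X u ∈ Ioo p (p + 1)
  U_X : ∀ u, U (X u) = u
  X_U : ∀ t ∈ Ioo p (p + 1), X (U t) = t
  mono : StrictMono X
  X_zero : X 0 = c
  conj : ∀ u, F (X u) = X (μ * u)

/-- The range of the coordinate of `exists_linCoord` on `(p, p + 1)` is all of `ℝ`, being stable
under a homothety of ratio greater than `1`. -/
lemma exists_linChart {F d : ℝ → ℝ} {p c μ : ℝ} (hF : ContDiff ℝ (⊤ : ℕ∞) F)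
    (hmono : StrictMono F) (hFp : F p = p) (hFq : F (p + 1) = p + 1)
    (hd : ContDiffOn ℝ (⊤ : ℕ∞) d (Ioo p (p + 1))) (hpos : ∀ t ∈ Ioo p (p + 1), 0 < d t)
    (hc : c ∈ Ioo p (p + 1)) (hFc : F c = c) (hμ : 0 < μ) (hμ1 : μ ≠ 1)
    (hinv : ∀ t ∈ Ioo p (p + 1), d (F t) * deriv F t = μ * d t) :
    Nonempty (LinChart F p c μ) := by
  have hmaps : ∀ t ∈ Ioo p (p + 1), F t ∈ Ioo p (p + 1) := fun t ht =>
    ⟨hFp ▸ hmono ht.1, hFq ▸ hmono ht.2⟩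
  obtain ⟨U, hU, hUc, hder, hUm, hUF⟩ := exists_linCoord hF hd hpos hc hFc hmaps hinv
  have hsurjF : ∀ t ∈ Ioo p (p + 1), ∃ s ∈ Ioo p (p + 1), F s = t := by
    intro t ht
    have := intermediate_value_Ioo (by linarith : p ≤ p + 1) hF.continuous.continuousOn
    rw [hFp, hFq] at this
    exact this ht
  -- The range of `U` is an interval around `0` stable under `μ` and `μ⁻¹`, hence everything.
  have hpow : ∃ κ : ℝ, 1 < κ ∧ ∀ t ∈ Ioo p (p + 1), ∃ s ∈ Ioo p (p + 1), U s = κ * U t := by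
    rcases lt_or_gt_of_ne hμ1 with h | h
    · refine ⟨μ⁻¹, (one_lt_inv₀ hμ).2 h, fun t ht => ?_⟩
      obtain ⟨s, hs, rfl⟩ := hsurjF t ht
      exact ⟨s, hs, by rw [hUF s hs]; field_simp⟩
    · exact ⟨μ, h, fun t ht => ⟨F t, hmaps t ht, hUF t ht⟩⟩
  obtain ⟨κ, hκ, hstep⟩ := hpow
  have hiter : ∀ (n : ℕ), ∀ t ∈ Ioo p (p + 1), ∃ s ∈ Ioo p (p + 1), U s = κ ^ n * U t := by
    intro n
    induction n with
    | zero => exact fun t ht => ⟨t, ht, by simp⟩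
    | succ n ih =>
      intro t ht
      obtain ⟨s, hs, e⟩ := ih t ht
      obtain ⟨s', hs', e'⟩ := hstep s hs
      exact ⟨s', hs', by rw [e', e]; ring⟩
  have hsurj : ∀ u : ℝ, ∃ t ∈ Ioo p (p + 1), U t = u := by
    intro u
    obtain ⟨tl, htl⟩ := exists_between hc.1
    obtain ⟨tr, htr⟩ := exists_between hc.2
    have hl : tl ∈ Ioo p (p + 1) := ⟨htl.1, htl.2.trans hc.2⟩
    have hr : tr ∈ Ioo p (p + 1) := ⟨hc.1.trans htr.1, htr.2⟩
    have hUl : U tl < 0 := hUc ▸ hUm hl hc htl.2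
    have hUr : 0 < U tr := hUc ▸ hUm hc hr htr.1
    obtain ⟨n, hn⟩ := pow_unbounded_of_one_lt (|u| / min (-U tl) (U tr)) hκ
    have hmin : 0 < min (-U tl) (U tr) := lt_min (by linarith) hUr
    rw [div_lt_iff₀ hmin] at hn
    have hκn : 0 < κ ^ n := by positivity
    have h1 : |u| ≤ κ ^ n * U tr :=
      hn.le.trans (mul_le_mul_of_nonneg_left (min_le_right _ _) hκn.le)
    have h2 : |u| ≤ κ ^ n * (-U tl) :=
      hn.le.trans (mul_le_mul_of_nonneg_left (min_le_left _ _) hκn.le)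
    obtain ⟨s1, hs1, e1⟩ := hiter n tl hl
    obtain ⟨s2, hs2, e2⟩ := hiter n tr hr
    have hord : U '' Ioo p (p + 1) |>.OrdConnected :=
      (isPreconnected_Ioo.image U hU.continuousOn).ordConnected
    have : u ∈ U '' Ioo p (p + 1) := hord.out ⟨s1, hs1, rfl⟩ ⟨s2, hs2, rfl⟩
      ⟨by rw [e1]; linarith [neg_abs_le u], by rw [e2]; linarith [le_abs_self u]⟩
    exact this
  choose X hX hUX using hsurj
  have hXU : ∀ t ∈ Ioo p (p + 1), X (U t) = t := fun t ht =>
    hUm.injOn (hX _) ht (hUX _)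
  have hXm : StrictMono X := by
    intro u v huv
    rw [← hUm.lt_iff_lt (hX u) (hX v), hUX, hUX]
    exact huv
  have hXc : Continuous X := by
    rw [continuous_iff_continuousAt]
    intro u
    refine continuousAt_of_monotoneOn_of_image_mem_nhds (s := univ) (hXm.monotone.monotoneOn _)
      Filter.univ_mem ?_
    refine Filter.mem_of_superset (isOpen_Ioo.mem_nhds (hX u)) ?_
    exact fun t ht => ⟨U t, mem_univ _, hXU t ht⟩
  let e : OpenPartialHomeomorph ℝ ℝ :=
    { toFun := U
      invFun := X
      source := Ioo p (p + 1)
      target := univ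
      map_source' := fun _ _ => mem_univ _
      map_target' := fun u _ => hX u
      left_inv' := fun t ht => hXU t ht
      right_inv' := fun u _ => hUX u
      open_source := isOpen_Ioo
      open_target := isOpen_univ
      continuousOn_toFun := hU.continuousOn
      continuousOn_invFun := hXc.continuousOn }
  have hXs : ContDiff ℝ (⊤ : ℕ∞) X := by
    rw [contDiff_iff_contDiffAt]
    intro u
    exact e.contDiffAt_symm_deriv (hpos _ (hX u)).ne' (mem_univ u) (hder _ (hX u))
      (hU.contDiffAt (isOpen_Ioo.mem_nhds (hX u)))
  refine ⟨⟨X, U, hXs, hU, hX, hUX, hXU, hXm, ?_, ?_⟩⟩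
  · rw [← hUc, hXU c hc]
  · intro u
    rw [← hXU _ (hmaps _ (hX u)), hUF _ (hX u), hUX]

/-! ### Series of flat functions along a saddle -/

/-- A compactly supported smooth function all of whose derivatives vanish on the axis `u = 0`
has all its derivatives bounded by any power of `|u|`. -/
lemma flat_bound {g : ℝ × ℝ → ℝ} (hg : ContDiff ℝ (⊤ : ℕ∞) g) (hcs : HasCompactSupport g)
    (hflat : ∀ (k : ℕ) (v : ℝ), iteratedFDeriv ℝ k g (0, v) = 0) (m : ℕ) :
    ∀ k : ℕ, ∃ C : ℝ, 0 ≤ C ∧ ∀ q : ℝ × ℝ, ‖iteratedFDeriv ℝ k g q‖ ≤ C * |q.1| ^ m := by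
  induction m with
  | zero =>
    intro k
    have hc : Continuous (iteratedFDeriv ℝ k g) :=
      hg.continuous_iteratedFDeriv (by exact_mod_cast le_top)
    obtain ⟨C, hC⟩ := hc.bounded_above_of_compact_support (hcs.iteratedFDeriv k)
    exact ⟨C, (norm_nonneg _).trans (hC 0), fun q => by simpa using hC q⟩
  | succ m ih =>
    intro k
    obtain ⟨C, hC0, hC⟩ := ih (k + 1)
    refine ⟨C, hC0, fun q => ?_⟩
    have hdiff : Differentiable ℝ (iteratedFDeriv ℝ k g) :=
      hg.differentiable_iteratedFDeriv (by exact_mod_cast WithTop.coe_lt_top _)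
    have hseg : ∀ z ∈ segment ℝ ((0 : ℝ), q.2) q,
        ‖fderiv ℝ (iteratedFDeriv ℝ k g) z‖ ≤ C * |q.1| ^ m := by
      rintro z ⟨a, b, ha, hb, hab, rfl⟩
      rw [norm_fderiv_iteratedFDeriv]
      refine (hC _).trans ?_
      refine mul_le_mul_of_nonneg_left (pow_le_pow_left₀ (abs_nonneg _) ?_ m) hC0
      simp only [Prod.fst_add, Prod.smul_fst, smul_eq_mul, mul_zero, zero_add, abs_mul]
      rw [abs_of_nonneg hb]
      nlinarith [abs_nonneg q.1]
    have := (convex_segment ((0 : ℝ), q.2) q).norm_image_sub_le_of_norm_fderiv_le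
      (fun z _ => hdiff z) hseg (left_mem_segment ℝ _ _) (right_mem_segment ℝ _ _)
    rw [hflat, sub_zero] at this
    refine this.trans (le_of_eq ?_)
    have hn : ‖q - ((0 : ℝ), q.2)‖ = |q.1| := by
      rw [Prod.norm_def]
      simp
    rw [hn]
    ring

/-- The `k`-th derivative of `g ∘ (u, v) ↦ (μⁿ u, μ⁻ⁿ v)` is at most `μ⁻ⁿᵏ` times that of `g`,
while flatness gives a factor `μ ^ (n (k + 1))`. -/
lemma saddle_term_bound {g : ℝ × ℝ → ℝ} (hg : ContDiff ℝ (⊤ : ℕ∞) g) (hcs : HasCompactSupport g)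
    (hflat : ∀ (k : ℕ) (v : ℝ), iteratedFDeriv ℝ k g (0, v) = 0) {μ : ℝ} (h0 : 0 < μ)
    (h1 : μ < 1) (k : ℕ) :
    ∃ C : ℝ, 0 ≤ C ∧ ∀ (n : ℕ) (q : ℝ × ℝ),
      ‖iteratedFDeriv ℝ k (fun q : ℝ × ℝ => g (μ ^ n * q.1, μ⁻¹ ^ n * q.2)) q‖ ≤
        C * |q.1| ^ (k + 1) * μ ^ n := by
  obtain ⟨C, hC0, hC⟩ := flat_bound hg hcs hflat (k + 1) k
  refine ⟨C, hC0, fun n q => ?_⟩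
  let A : ℝ × ℝ →L[ℝ] ℝ × ℝ :=
    ((μ ^ n) • ContinuousLinearMap.fst ℝ ℝ ℝ).prod ((μ⁻¹ ^ n) • ContinuousLinearMap.snd ℝ ℝ ℝ)
  have hA : (fun q : ℝ × ℝ => g (μ ^ n * q.1, μ⁻¹ ^ n * q.2)) = g ∘ A := by
    ext q; simp [A]
  have hμi : 1 ≤ μ⁻¹ := (one_le_inv₀ h0).2 h1.le
  have hAn : ‖A‖ ≤ μ⁻¹ ^ n := by
    refine ContinuousLinearMap.opNorm_le_bound _ (by positivity) fun q => ?_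
    have e : A q = (μ ^ n * q.1, μ⁻¹ ^ n * q.2) := by simp [A]
    rw [e, Prod.norm_def, Prod.norm_def]
    simp only [norm_mul, norm_pow, Real.norm_eq_abs, abs_inv, abs_of_pos h0]
    refine max_le ?_ ?_
    · have : μ ^ n ≤ μ⁻¹ ^ n := by
        gcongr
        exact h1.le.trans hμi
      gcongr
      exact le_max_left _ _
    · gcongr
      exact le_max_right _ _
  rw [hA, A.iteratedFDeriv_comp_right hg q (by exact_mod_cast le_top)]
  refine (ContinuousMultilinearMap.norm_compContinuousLinearMap_le _ _).trans ?_
  rw [Finset.prod_const, Finset.card_univ, Fintype.card_fin]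
  have e1 : (A q).1 = μ ^ n * q.1 := by simp [A]
  calc ‖iteratedFDeriv ℝ k g (A q)‖ * ‖A‖ ^ k
      ≤ (C * |(A q).1| ^ (k + 1)) * (μ⁻¹ ^ n) ^ k := by
        gcongr
        exact hC _
    _ = C * |q.1| ^ (k + 1) * μ ^ n := by
        rw [e1, abs_mul, abs_of_pos (pow_pos h0 n), inv_pow, inv_pow, mul_pow, pow_succ (μ ^ n)]
        field_simp

/-- The sum of a compactly supported function, flat along `u = 0`, over the forward orbit of
`(u, v) ↦ (μ u, μ⁻¹ v)` is smooth. -/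
lemma saddle_series {g : ℝ × ℝ → ℝ} (hg : ContDiff ℝ (⊤ : ℕ∞) g) (hcs : HasCompactSupport g)
    (hflat : ∀ (k : ℕ) (v : ℝ), iteratedFDeriv ℝ k g (0, v) = 0) {μ : ℝ} (h0 : 0 < μ)
    (h1 : μ < 1) :
    ContDiff ℝ (⊤ : ℕ∞) fun q : ℝ × ℝ => ∑' n : ℕ, g (μ ^ n * q.1, μ⁻¹ ^ n * q.2) := by
  rw [contDiff_iff_contDiffAt]
  intro q₀
  -- Multiplying by a cutoff in `u` makes the estimates of `saddle_term_bound` uniform.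
  let χ : ContDiffBump (q₀.1) := ⟨1, 2, one_pos, one_lt_two⟩
  let χ' : ℝ × ℝ → ℝ := fun q => χ q.1
  have hχ' : ContDiff ℝ (⊤ : ℕ∞) χ' := χ.contDiff.comp contDiff_fst
  let R : ℝ := |q₀.1| + 3
  have hR : 0 < R := by positivity
  have hχ0 : ∀ q : ℝ × ℝ, R ≤ |q.1| → ∀ k, iteratedFDeriv ℝ k χ' q = 0 := by
    intro q hq k
    have hev : χ' =ᶠ[nhds q] fun _ => (0 : ℝ) := by
      have hlt : 2 < dist q.1 q₀.1 := by
        rw [Real.dist_eq]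
        have := abs_sub_abs_le_abs_sub q.1 q₀.1
        simp only [R] at hq
        linarith
      have hopen : IsOpen {q : ℝ × ℝ | 2 < dist q.1 q₀.1} :=
        isOpen_lt continuous_const (continuous_fst.dist continuous_const)
      filter_upwards [hopen.mem_nhds hlt] with z hz
      exact χ.zero_of_le_dist (le_of_lt hz)
    have h := hev.iteratedFDeriv ℝ k
    have h2 := h.self_of_nhds
    rw [h2]
    simp
  have hχb : ∀ k, ∃ B : ℝ, 0 ≤ B ∧ ∀ q, ‖iteratedFDeriv ℝ k χ' q‖ ≤ B := by
    intro k
    obtain ⟨B, hB⟩ := (χ.contDiff.continuous_iteratedFDeriv (n := (⊤ : ℕ∞)) (m := k)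
      (by exact_mod_cast le_top)).bounded_above_of_compact_support
      (χ.hasCompactSupport.iteratedFDeriv k)
    refine ⟨B, (norm_nonneg _).trans (hB 0), fun q => ?_⟩
    have e : χ' = (χ : ℝ → ℝ) ∘ (ContinuousLinearMap.fst ℝ ℝ ℝ) := rfl
    rw [e, (ContinuousLinearMap.fst ℝ ℝ ℝ).iteratedFDeriv_comp_right
      (χ.contDiff (n := (⊤ : ℕ∞))) q (by exact_mod_cast le_top)]
    refine (ContinuousMultilinearMap.norm_compContinuousLinearMap_le _ _).trans ?_
    rw [Finset.prod_const, Finset.card_univ, Fintype.card_fin]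
    calc _ ≤ B * 1 ^ k := by
          gcongr
          · exact (norm_nonneg _).trans (hB 0)
          · exact hB _
          · exact ContinuousLinearMap.norm_fst_le _ _ _
      _ = B := by simp
  choose B hB0 hB using hχb
  choose C hC0 hC using fun k => saddle_term_bound hg hcs hflat h0 h1 k
  have hterm : ∀ n : ℕ, ContDiff ℝ (⊤ : ℕ∞)
      fun q : ℝ × ℝ => g (μ ^ n * q.1, μ⁻¹ ^ n * q.2) := by
    intro n
    exact hg.comp (by fun_prop)
  have hmain : ContDiff ℝ (⊤ : ℕ∞)
      fun q : ℝ × ℝ => ∑' n : ℕ, χ' q * g (μ ^ n * q.1, μ⁻¹ ^ n * q.2) := by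
    refine contDiff_tsum
      (v := fun k n => (∑ i ∈ Finset.range (k + 1),
        (k.choose i : ℝ) * B i * (C (k - i) * R ^ (k - i + 1))) * μ ^ n)
      (fun n => hχ'.mul (hterm n)) ?_ ?_
    · intro k _
      exact (summable_geometric_of_lt_one h0.le h1).mul_left _
    · intro k n q _
      refine (norm_iteratedFDeriv_mul_le hχ' (hterm n) q (n := k)
        (by exact_mod_cast le_top)).trans ?_
      rw [Finset.sum_mul]
      refine Finset.sum_le_sum fun i _ => ?_
      by_cases hq : R ≤ |q.1|
      · rw [hχ0 q hq i]
        simp only [norm_zero, mul_zero, zero_mul]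
        have := hB0 i
        have := hC0 (k - i)
        positivity
      · have hq' : |q.1| ≤ R := (not_le.1 hq).le
        rw [mul_assoc _ _ (μ ^ n), mul_assoc (C (k - i)) _ (μ ^ n)]
        have := hB0 i
        have := hC0 (k - i)
        refine mul_le_mul (mul_le_mul_of_nonneg_left (hB i q) (by positivity)) ?_
          (norm_nonneg _) (by positivity)
        refine (hC (k - i) n q).trans ?_
        rw [mul_assoc]
        gcongr
  refine hmain.contDiffAt.congr_of_eventuallyEq ?_
  have hopen : IsOpen {q : ℝ × ℝ | dist q.1 q₀.1 < 1} :=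
    isOpen_lt (continuous_fst.dist continuous_const) continuous_const
  filter_upwards [hopen.mem_nhds (by simp : q₀ ∈ {q : ℝ × ℝ | dist q.1 q₀.1 < 1})] with q hq
  have : χ' q = 1 := χ.one_of_mem_closedBall (Metric.mem_closedBall.2 (le_of_lt hq))
  simp [this]

/-! ### The cohomological equation near one saddle -/

lemma exists_shift {a t : ℝ} (h : para t ≠ para a) : ∃ k : ℤ, t - k ∈ Ioo a (a + 1) := by
  refine ⟨⌊t - a⌋, ?_, ?_⟩
  · have h1 := Int.floor_le (t - a)
    rcases h1.lt_or_eq with h1 | h1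
    · linarith
    · exact absurd (para_eq_iff.2 ⟨⌊t - a⌋, by linarith⟩) h
  · linarith [Int.lt_floor_add_one (t - a)]

lemma accPt_lift {L : Set RP1} (hL : Preperfect L) {t : ℝ} (ht : para t ∈ L) {W : Set ℝ}
    (hW : W ∈ nhds t) : ∃ s ∈ W, s ≠ t ∧ para s ∈ L := by
  have h1 := accPt_iff_nhds.1 (hL _ ht) (para '' W) (isOpenMap_para.image_mem_nhds hW)
  obtain ⟨y, ⟨⟨s, hs, rfl⟩, hyL⟩, hne⟩ := h1
  exact ⟨s, hs, fun h => hne (by rw [h]), hyL⟩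

lemma IsLift.iterate {F : ℝ → ℝ} {f : RP1 → RP1} (hF : IsLift F f) (n : ℕ) (t : ℝ) :
    f^[n] (para t) = para (F^[n] t) := by
  induction n generalizing t with
  | zero => rfl
  | succ n ih => rw [iterate_succ_apply, iterate_succ_apply, hF t, ih]

lemma LinChart.conj_iterate {F : ℝ → ℝ} {p c μ : ℝ} (A : LinChart F p c μ) (n : ℕ) (u : ℝ) :
    F^[n] (A.X u) = A.X (μ ^ n * u) := by
  induction n generalizing u with
  | zero => simp
  | succ n ih => rw [iterate_succ_apply, A.conj, ih, pow_succ, mul_assoc]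

lemma isOpen_offDiag2 : IsOpen offDiag2 :=
  isOpen_ne_fun (continuous_para.comp continuous_fst) (continuous_para.comp continuous_snd)

/-- The set of parameters whose image lies in a perfect set has no isolated points, so
derivatives within it are unique. -/
lemma LinChart.uniqueDiffOn {F : ℝ → ℝ} {p c μ : ℝ} (A : LinChart F p c μ) {L : Set RP1}
    (hL : Preperfect L) : UniqueDiffOn ℝ {u : ℝ | para (A.X u) ∈ L} := by
  intro u hu
  rw [uniqueDiffWithinAt_iff_accPt, accPt_iff_nhds]
  intro W hW
  have hUc : ContinuousAt A.U (A.X u) :=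
    A.smooth_U.continuousOn.continuousAt (isOpen_Ioo.mem_nhds (A.mem u))
  have hW' : A.U ⁻¹' W ∈ nhds (A.X u) := hUc.preimage_mem_nhds (by rwa [A.U_X])
  obtain ⟨s, ⟨hs1, hs2⟩, hne, hsL⟩ :=
    accPt_lift hL hu (Filter.inter_mem hW' (isOpen_Ioo.mem_nhds (A.mem u)))
  refine ⟨A.U s, ⟨hs1, ?_⟩, ?_⟩
  · show para (A.X (A.U s)) ∈ L
    rwa [A.X_U s hs2]
  · intro h
    apply hne
    rw [← A.X_U s hs2, h]

/-- Let `ψ` be smooth off the diagonal, zero over the perfect set `L`, and zero when its second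
argument is close to the attracting fixed point `b`. Then the sum of `ψ` over forward orbits is
smooth off the diagonal and solves `σ = ψ + σ ∘ (f × f)`. The sum is locally finite except where
the second argument is the repelling point `a`; there it is the series of `saddle_series`. -/
lemma half_solution {f : RP1 → RP1} {F : ℝ → ℝ} (hlift : IsLift F f) (hinj : Injective f)
    (hF : ContDiff ℝ (⊤ : ℕ∞) F) {a b μ : ℝ} (hab : a < b) (hba : b < a + 1)
    (h0 : 0 < μ) (h1 : μ < 1) (A : LinChart F a b μ) (B : LinChart F (b - 1) a μ⁻¹)
    {L : Set RP1} (hL : Preperfect L) (haL : para a ∈ L) (hbL : para b ∈ L)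
    (hfL : ∀ x ∈ L, f x ∈ L) {ψ : RP1 → RP1 → ℝ}
    (hψ : ContDiffOn ℝ (⊤ : ℕ∞) (chartDensity ψ) offDiag2)
    (hψL : ∀ x y, x ≠ y → (x ∈ L ∨ y ∈ L) → ψ x y = 0)
    (hψb : ∀ᶠ t in nhds b, ∀ x, ψ x (para t) = 0) :
    ContDiffOn ℝ (⊤ : ℕ∞) (chartDensity fun x y => ∑' n : ℕ, ψ (f^[n] x) (f^[n] y)) offDiag2 ∧
      ∀ x y, x ≠ y → ∑' n : ℕ, ψ (f^[n] x) (f^[n] y) =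
        ψ x y + ∑' n : ℕ, ψ (f^[n] (f x)) (f^[n] (f y)) := by
  have hinjn : ∀ n : ℕ, Injective f^[n] := fun n => hinj.iterate n
  have hLn : ∀ (n : ℕ) x, x ∈ L → f^[n] x ∈ L := by
    intro n
    induction n with
    | zero => exact fun x hx => hx
    | succ n ih =>
      intro x hx
      rw [iterate_succ_apply]
      exact ih _ (hfL x hx)
  obtain ⟨ε, hε, hε'⟩ : ∃ ε > 0, ∀ u : ℝ, |u| ≤ ε → ∀ x, ψ x (para (A.X u)) = 0 := by
    have hc : Filter.Tendsto A.X (nhds 0) (nhds b) := by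
      have := A.smooth_X.continuous.tendsto 0
      rwa [A.X_zero] at this
    obtain ⟨ε, hε, h⟩ := Metric.eventually_nhds_iff.1 (hc.eventually hψb)
    refine ⟨ε / 2, by positivity, fun u hu x => h ?_ x⟩
    rw [Real.dist_eq, sub_zero]
    linarith
  have hε2 : ∀ t ∈ Icc (A.X (-ε)) (A.X ε), ∀ x, ψ x (para t) = 0 := by
    intro t ht x
    have htm : t ∈ Ioo a (a + 1) :=
      ⟨(A.mem (-ε)).1.trans_le ht.1, ht.2.trans_lt (A.mem ε).2⟩
    rw [← A.X_U t htm]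
    apply hε'
    rw [abs_le]
    constructor
    · rw [← A.mono.le_iff_le, A.X_U t htm]; exact ht.1
    · rw [← A.mono.le_iff_le, A.X_U t htm]; exact ht.2
  have hfX : ∀ (n : ℕ) u, f^[n] (para (A.X u)) = para (A.X (μ ^ n * u)) := fun n u => by
    rw [hlift.iterate, A.conj_iterate]
  have hfY : ∀ (n : ℕ) v, f^[n] (para (B.X v)) = para (B.X (μ⁻¹ ^ n * v)) := fun n v => by
    rw [hlift.iterate, B.conj_iterate]
  -- Terms vanish once the second argument has been brought close to `b`.
  have hvan : ∀ (N n : ℕ) (R u : ℝ), μ ^ N * R < ε → |u| ≤ R → N ≤ n → ∀ x,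
      ψ x (f^[n] (para (A.X u))) = 0 := by
    intro N n R u hN hu hn x
    rw [hfX]
    apply hε'
    rw [abs_mul, abs_of_pos (pow_pos h0 n)]
    calc μ ^ n * |u| ≤ μ ^ N * R :=
          mul_le_mul (pow_le_pow_of_le_one h0.le h1.le hn) hu (abs_nonneg _) (by positivity)
      _ ≤ ε := hN.le
  have hexN : ∀ R δ : ℝ, 0 < δ → ∃ N : ℕ, μ ^ N * R < δ := by
    intro R δ hδ
    have := (tendsto_pow_atTop_nhds_zero_of_lt_one h0.le h1).mul_const R
    rw [zero_mul] at this
    exact (this.eventually (gt_mem_nhds hδ)).exists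
  have hsum : ∀ x y, x ≠ y → Summable fun n : ℕ => ψ (f^[n] x) (f^[n] y) := by
    intro x y hxy
    by_cases hy : y = para a
    · have : (fun n : ℕ => ψ (f^[n] x) (f^[n] y)) = fun _ => 0 := by
        ext n
        exact hψL _ _ ((hinjn n).ne hxy) (Or.inr (hLn n y (hy ▸ haL)))
      rw [this]
      exact summable_zero
    · obtain ⟨t, rfl⟩ := para_surjective y
      obtain ⟨k, hk⟩ := exists_shift hy
      have e : para t = para (A.X (A.U (t - k))) := by
        rw [A.X_U _ hk]
        exact para_eq_iff.2 ⟨k, by ring⟩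
      obtain ⟨N, hN⟩ := hexN |A.U (t - k)| ε hε
      refine summable_of_ne_finset_zero (s := Finset.range N) fun n hn => ?_
      rw [e]
      exact hvan N n _ _ hN le_rfl (by simpa using hn) _
  refine ⟨?_, fun x y hxy => ?_⟩
  swap
  · rw [(hsum x y hxy).tsum_eq_zero_add]
    rfl
  have hterm : ∀ (n : ℕ) (q : ℝ × ℝ), q ∈ offDiag2 → ContDiffAt ℝ (⊤ : ℕ∞)
      (fun q : ℝ × ℝ => ψ (f^[n] (para q.1)) (f^[n] (para q.2))) q := by
    intro n q hq
    have hFn : ContDiff ℝ (⊤ : ℕ∞) F^[n] := by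
      induction n with
      | zero => exact contDiff_id
      | succ n ih => rw [iterate_succ]; exact ih.comp hF
    have e : (fun q : ℝ × ℝ => ψ (f^[n] (para q.1)) (f^[n] (para q.2))) =
        chartDensity ψ ∘ fun q : ℝ × ℝ => (F^[n] q.1, F^[n] q.2) := by
      ext q
      simp only [comp_apply, chartDensity, hlift.iterate]
    rw [e]
    refine ContDiffAt.comp q (hψ.contDiffAt (isOpen_offDiag2.mem_nhds ?_)) ?_
    · show para (F^[n] q.1) ≠ para (F^[n] q.2)
      rw [← hlift.iterate, ← hlift.iterate]
      exact (hinjn n).ne hq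
    · exact ((hFn.comp contDiff_fst).prodMk (hFn.comp contDiff_snd)).contDiffAt
  rintro ⟨s, t⟩ hst
  refine ContDiffAt.contDiffWithinAt ?_
  by_cases ht : para t = para a
  swap
  · obtain ⟨k, hk⟩ := exists_shift ht
    have hc : ContinuousAt (fun q : ℝ × ℝ => A.U (q.2 - k)) (s, t) := by
      have hU : ContinuousAt A.U (t - k) :=
        A.smooth_U.continuousOn.continuousAt (isOpen_Ioo.mem_nhds hk)
      exact ContinuousAt.comp (f := fun q : ℝ × ℝ => q.2 - k) (x := (s, t)) hU
        (by fun_prop)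
    obtain ⟨N, hN⟩ := hexN (|A.U (t - k)| + 1) ε hε
    have hev : ∀ᶠ q : ℝ × ℝ in nhds (s, t), |A.U (q.2 - k)| < |A.U (t - k)| + 1 :=
      hc.abs.eventually (gt_mem_nhds (lt_add_one _))
    have hev2 : ∀ᶠ q : ℝ × ℝ in nhds (s, t), q.2 - k ∈ Ioo a (a + 1) :=
      (isOpen_Ioo.preimage (by fun_prop : Continuous fun q : ℝ × ℝ => q.2 - k)).mem_nhds hk
    refine ContDiffAt.congr_of_eventuallyEq (f := fun q : ℝ × ℝ =>
      ∑ n ∈ Finset.range N, ψ (f^[n] (para q.1)) (f^[n] (para q.2))) ?_ ?_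
    · exact ContDiffAt.sum fun n _ => hterm n _ hst
    · filter_upwards [hev, hev2] with q hq hq2
      refine tsum_eq_sum fun n hn => ?_
      have e : para q.2 = para (A.X (A.U (q.2 - k))) := by
        rw [A.X_U _ hq2]
        exact para_eq_iff.2 ⟨k, by ring⟩
      rw [e]
      exact hvan N n _ _ hN hq.le (by simpa using hn) _
  · obtain ⟨j, hj⟩ := para_eq_iff.1 ht
    obtain ⟨k, hk⟩ := exists_shift (a := a) (t := s) (ht ▸ hst)
    have hj' : t - j ∈ Ioo (b - 1) (b - 1 + 1) := by
      rw [hj]; constructor <;> linarith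
    let χ : ContDiffBump (0 : ℝ) := ⟨ε / 4, ε / 2, by positivity, by linarith⟩
    let g : ℝ × ℝ → ℝ := fun q => χ q.1 * ψ (para (A.X q.1)) (para (B.X q.2))
    have hχ0 : ∀ u : ℝ, ε / 2 ≤ |u| → χ u = 0 := fun u hu =>
      χ.zero_of_le_dist (by rw [Real.dist_eq, sub_zero]; exact hu)
    have hg : ContDiff ℝ (⊤ : ℕ∞) g := by
      rw [contDiff_iff_contDiffAt]
      rintro ⟨u, v⟩
      by_cases huv : para (A.X u) = para (B.X v)
      · have hzero : g =ᶠ[nhds (u, v)] fun _ => 0 := by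
          by_cases hu : |u| < ε
          · obtain ⟨m, hm⟩ := para_eq_iff.1 huv
            have hin : B.X v + m ∈ Ioo (A.X (-ε)) (A.X ε) := by
              rw [← hm]
              exact ⟨A.mono (abs_lt.1 hu).1, A.mono (abs_lt.1 hu).2⟩
            have hcont : Continuous fun q : ℝ × ℝ => B.X q.2 + m :=
              (B.smooth_X.continuous.comp continuous_snd).add continuous_const
            filter_upwards [(isOpen_Ioo.preimage hcont).mem_nhds
              (show (u, v) ∈ (fun q : ℝ × ℝ => B.X q.2 + m) ⁻¹' Ioo (A.X (-ε)) (A.X ε) from hin)]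
              with q hq
            have : ψ (para (A.X q.1)) (para (B.X q.2)) = 0 := by
              rw [← para_add_int (B.X q.2) m]
              exact hε2 _ (Ioo_subset_Icc_self hq) _
            simp [g, this]
          · have hopen : IsOpen {q : ℝ × ℝ | ε / 2 < |q.1|} :=
              isOpen_lt continuous_const continuous_fst.abs
            filter_upwards [hopen.mem_nhds
              (show (u, v) ∈ {q : ℝ × ℝ | ε / 2 < |q.1|} by
                show ε / 2 < |u|
                linarith)] with q hq
            simp only [g, hχ0 q.1 (le_of_lt hq), zero_mul]
        exact contDiffAt_const.congr_of_eventuallyEq hzero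
      · refine ContDiffAt.mul (χ.contDiff.comp contDiff_fst).contDiffAt ?_
        have e : (fun q : ℝ × ℝ => ψ (para (A.X q.1)) (para (B.X q.2))) =
          chartDensity ψ ∘ fun q : ℝ × ℝ => (A.X q.1, B.X q.2) := rfl
        rw [e]
        refine ContDiffAt.comp (u, v) (hψ.contDiffAt (isOpen_offDiag2.mem_nhds huv)) ?_
        exact ((A.smooth_X.comp contDiff_fst).prodMk (B.smooth_X.comp contDiff_snd)).contDiffAt
    have hXb : A.X (-ε) < b ∧ b < A.X ε := by
      have e1 := A.mono (show -ε < 0 by linarith)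
      have e2 := A.mono hε
      exact ⟨e1.trans_eq A.X_zero, A.X_zero.symm.trans_lt e2⟩
    have hcs : HasCompactSupport g := by
      have hm1 : A.X ε - 1 ∈ Ioo (b - 1) (b - 1 + 1) := by
        constructor <;> linarith [(A.mem ε).2]
      have hm2 : A.X (-ε) ∈ Ioo (b - 1) (b - 1 + 1) := by
        constructor <;> linarith [(A.mem (-ε)).1]
      refine HasCompactSupport.intro (K := Icc (-ε) ε ×ˢ
        Icc (B.U (A.X ε - 1)) (B.U (A.X (-ε)))) (isCompact_Icc.prod isCompact_Icc) ?_
      rintro ⟨u, v⟩ hq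
      by_cases hu : ε / 2 ≤ |u|
      · simp only [g, hχ0 u hu, zero_mul]
      · have hu' : u ∈ Icc (-ε) ε := by
          rw [mem_Icc, ← abs_le]; linarith
        have hv : v < B.U (A.X ε - 1) ∨ B.U (A.X (-ε)) < v := by
          by_contra hcon
          push Not at hcon
          exact hq ⟨hu', hcon⟩
        have hz : ψ (para (A.X u)) (para (B.X v)) = 0 := by
          rcases hv with hv | hv
          · have h2 := B.mono hv
            rw [B.X_U _ hm1] at h2
            rw [← para_add_one (B.X v)]
            refine hε2 _ ⟨?_, by linarith⟩ _
            linarith [(B.mem v).1]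
          · have h2 := B.mono hv
            rw [B.X_U _ hm2] at h2
            refine hε2 _ ⟨h2.le, ?_⟩ _
            linarith [(B.mem v).2]
        simp only [g, hz, mul_zero]
    have hflat : ∀ (k : ℕ) (v : ℝ), iteratedFDeriv ℝ k g (0, v) = 0 := by
      intro k v
      let S : Set (ℝ × ℝ) := {u : ℝ | para (A.X u) ∈ L} ×ˢ univ
      have hS : UniqueDiffOn ℝ S := (A.uniqueDiffOn hL).prod uniqueDiffOn_univ
      have hmem : ((0 : ℝ), v) ∈ S := ⟨by simpa [A.X_zero] using hbL, mem_univ _⟩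
      have hgS : EqOn g (fun _ => 0) S := by
        rintro ⟨u, v⟩ ⟨hu, -⟩
        by_cases huv : para (A.X u) = para (B.X v)
        · by_cases hue : |u| ≤ ε
          · simp only [g, ← huv, hε' u hue, mul_zero]
          · simp only [g, hχ0 u (by linarith), zero_mul]
        · simp only [g, hψL _ _ huv (Or.inl hu), mul_zero]
      rw [← iteratedFDerivWithin_eq_iteratedFDeriv hS
        (hg.contDiffAt.of_le (by exact_mod_cast le_top)) hmem,
        iteratedFDerivWithin_congr hgS hmem]
      simp
    obtain ⟨N, hN⟩ := hexN (|A.U (s - k)| + 1) (ε / 4) (by positivity)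
    have hUs : ContDiffAt ℝ (⊤ : ℕ∞) (fun q : ℝ × ℝ => A.U (q.1 - k)) (s, t) :=
      ContDiffAt.comp (f := fun q : ℝ × ℝ => q.1 - k) (s, t)
        (A.smooth_U.contDiffAt (isOpen_Ioo.mem_nhds hk)) (by fun_prop)
    have hVs : ContDiffAt ℝ (⊤ : ℕ∞) (fun q : ℝ × ℝ => B.U (q.2 - j)) (s, t) :=
      ContDiffAt.comp (f := fun q : ℝ × ℝ => q.2 - j) (s, t)
        (B.smooth_U.contDiffAt (isOpen_Ioo.mem_nhds hj')) (by fun_prop)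
    have hev : ∀ᶠ q : ℝ × ℝ in nhds (s, t), |A.U (q.1 - k)| < |A.U (s - k)| + 1 :=
      hUs.continuousAt.abs.eventually (gt_mem_nhds (lt_add_one _))
    have hev2 : ∀ᶠ q : ℝ × ℝ in nhds (s, t), q.1 - k ∈ Ioo a (a + 1) :=
      (isOpen_Ioo.preimage (by fun_prop : Continuous fun q : ℝ × ℝ => q.1 - k)).mem_nhds hk
    have hev3 : ∀ᶠ q : ℝ × ℝ in nhds (s, t), q.2 - j ∈ Ioo (b - 1) (b - 1 + 1) :=
      (isOpen_Ioo.preimage (by fun_prop : Continuous fun q : ℝ × ℝ => q.2 - j)).mem_nhds hj'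
    refine ContDiffAt.congr_of_eventuallyEq (f := fun q : ℝ × ℝ =>
      (∑ n ∈ Finset.range N, ψ (f^[n] (para q.1)) (f^[n] (para q.2))) +
      (fun z : ℝ × ℝ => ∑' n : ℕ, g (μ ^ n * z.1, μ⁻¹ ^ n * z.2))
        (μ ^ N * A.U (q.1 - k), μ⁻¹ ^ N * B.U (q.2 - j))) ?_ ?_
    · refine ContDiffAt.add (ContDiffAt.sum fun n _ => hterm n _ hst) ?_
      refine ContDiffAt.comp (g := fun z : ℝ × ℝ => ∑' n : ℕ, g (μ ^ n * z.1, μ⁻¹ ^ n * z.2))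
        (f := fun q : ℝ × ℝ => (μ ^ N * A.U (q.1 - k), μ⁻¹ ^ N * B.U (q.2 - j))) (s, t)
        (saddle_series hg hcs hflat h0 h1).contDiffAt ?_
      exact (contDiffAt_const.mul hUs).prodMk (contDiffAt_const.mul hVs)
    · filter_upwards [hev, hev2, hev3, isOpen_offDiag2.mem_nhds hst] with q hq hq2 hq3 hq4
      show ∑' n : ℕ, ψ (f^[n] (para q.1)) (f^[n] (para q.2)) = _
      rw [← (hsum _ _ hq4).sum_add_tsum_nat_add N]
      congr 1
      refine tsum_congr fun n => ?_
      have e1 : para q.1 = para (A.X (A.U (q.1 - k))) := by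
        rw [A.X_U _ hq2]
        exact para_eq_iff.2 ⟨k, by ring⟩
      have e2 : para q.2 = para (B.X (B.U (q.2 - j))) := by
        rw [B.X_U _ hq3]
        exact para_eq_iff.2 ⟨j, by ring⟩
      rw [e1, e2, hfX, hfY]
      simp only [g, ← mul_assoc, ← pow_add]
      rw [χ.one_of_mem_closedBall, one_mul]
      rw [Metric.mem_closedBall, Real.dist_eq, sub_zero, abs_mul, abs_of_pos (pow_pos h0 _)]
      calc μ ^ (n + N) * |A.U (q.1 - k)| ≤ μ ^ N * (|A.U (s - k)| + 1) :=
            mul_le_mul (pow_le_pow_of_le_one h0.le h1.le (Nat.le_add_left N n)) hq.le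
              (abs_nonneg _) (by positivity)
        _ ≤ ε / 4 := hN.le

/-! ### Pairs of fixed points -/

/-- `F` is an increasing smooth lift of a circle diffeomorphism which fixes `a < b < a + 1`, two
points lying over `L`, and which preserves the form `ω` at all pairs with a member in `L`. -/
structure FixPair (F : ℝ → ℝ) (a b : ℝ) (L : Set RP1) (ω : RP1 → RP1 → ℝ) : Prop where
  smooth : ContDiff ℝ (⊤ : ℕ∞) F
  deriv_pos : ∀ t, 0 < deriv F t
  deg : ∀ t, F (t + 1) = F t + 1
  hab : a < b
  hba : b < a + 1
  fix_a : F a = a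
  fix_b : F b = b
  a_mem : para a ∈ L
  b_mem : para b ∈ L
  form : IsVolumeForm (⊤ : ℕ∞) ω
  inv : ∀ s t, para s ≠ para t → (para s ∈ L ∨ para t ∈ L) →
    ω (para (F s)) (para (F t)) * deriv F s * deriv F t = ω (para s) (para t)

lemma para_ne_of_mem_Ioo {p t : ℝ} (ht : t ∈ Ioo p (p + 1)) : para p ≠ para t := by
  intro h
  obtain ⟨k, hk⟩ := para_eq_iff.1 h
  have h1 : (k : ℝ) < 0 := by linarith [ht.1]
  have h2 : (-1 : ℝ) < k := by linarith [ht.2]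
  have h3 : k < 0 := by exact_mod_cast h1
  have h4 : -1 < k := by exact_mod_cast h2
  omega

namespace FixPair

variable {F G : ℝ → ℝ} {a b : ℝ} {L : Set RP1} {ω : RP1 → RP1 → ℝ}

lemma mono (h : FixPair F a b L ω) : StrictMono F := strictMono_of_deriv_pos h.deriv_pos

lemma differentiable (h : FixPair F a b L ω) : Differentiable ℝ F :=
  h.smooth.differentiable (by simp)

lemma deg_sub (h : FixPair F a b L ω) (t : ℝ) : F (t - 1) = F t - 1 := by
  have := h.deg (t - 1)
  rw [sub_add_cancel] at this
  linarith

lemma deriv_sub (h : FixPair F a b L ω) (t : ℝ) : deriv F (t - 1) = deriv F t := by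
  have e : (fun t => F (t - 1)) = fun t => F t - 1 := funext h.deg_sub
  rw [← deriv_comp_sub_const, e, deriv_sub_const]

/-- The two fixed points may be exchanged, after translating `b` by `-1`. -/
lemma rot (h : FixPair F a b L ω) : FixPair F (b - 1) a L ω where
  smooth := h.smooth
  deriv_pos := h.deriv_pos
  deg := h.deg
  hab := by linarith [h.hba]
  hba := by linarith [h.hab]
  fix_a := by rw [h.deg_sub, h.fix_b]
  fix_b := h.fix_a
  a_mem := by rw [para_sub_one]; exact h.b_mem
  b_mem := h.a_mem
  form := h.form
  inv := h.inv

lemma deriv_mul_inverse (h : FixPair F a b L ω) (hG : ContDiff ℝ (⊤ : ℕ∞) G)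
    (hGF : ∀ t, G (F t) = t) (t : ℝ) : deriv G (F t) * deriv F t = 1 := by
  have h1 : HasDerivAt (G ∘ F) (deriv G (F t) * deriv F t) t :=
    (((hG.differentiable (by simp)) (F t)).hasDerivAt).comp t (h.differentiable t).hasDerivAt
  have h2 : G ∘ F = id := funext hGF
  rw [h2] at h1
  exact h1.unique (hasDerivAt_id t)

lemma inverse (h : FixPair F a b L ω) (hG : ContDiff ℝ (⊤ : ℕ∞) G)
    (hGF : ∀ t, G (F t) = t) (hFG : ∀ t, F (G t) = t)
    (hL : ∀ t, para t ∈ L → para (G t) ∈ L) : FixPair G a b L ω := by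
  have hd : ∀ t, deriv G t * deriv F (G t) = 1 := fun t => by
    have := h.deriv_mul_inverse hG hGF (G t)
    rwa [hFG] at this
  have hdeg : ∀ t, G (t + 1) = G t + 1 := fun t => by
    apply h.mono.injective
    rw [hFG, h.deg, hFG]
  refine ⟨hG, fun t => ?_, hdeg, h.hab, h.hba, ?_, ?_, h.a_mem, h.b_mem, h.form, ?_⟩
  · exact pos_of_mul_pos_left (by rw [hd t]; exact one_pos) (h.deriv_pos _).le
  · conv_lhs => rw [← h.fix_a]
    exact hGF a
  · conv_lhs => rw [← h.fix_b]
    exact hGF b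
  · intro s t hst hmem
    have hne : para (G s) ≠ para (G t) := by
      intro e
      obtain ⟨k, hk⟩ := para_eq_iff.1 e
      have hper : ∀ (n : ℕ) (t : ℝ), F (t + n) = F t + n := by
        intro n
        induction n with
        | zero => simp
        | succ n ih => intro t; push_cast; rw [← add_assoc, h.deg, ih]; ring
      apply hst
      rcases Int.eq_nat_or_neg k with ⟨n, rfl | rfl⟩
      · push_cast at hk
        have := hper n (G t)
        rw [← hk, hFG, hFG] at this
        exact para_eq_iff.2 ⟨n, by push_cast; linarith⟩
      · push_cast at hk
        have := hper n (G s)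
        rw [show G s + n = G t by linarith, hFG, hFG] at this
        exact para_eq_iff.2 ⟨-n, by push_cast; linarith⟩
    have e := h.inv (G s) (G t) hne (hmem.imp (hL s) (hL t))
    rw [hFG, hFG] at e
    rw [← e]
    linear_combination (ω (para s) (para t)) * (deriv G t * deriv F (G t) * hd s + hd t)

lemma deriv_mul (h : FixPair F a b L ω) : deriv F a * deriv F b = 1 := by
  have hne := para_ne_of_mem_Ioo (p := a) (t := b) ⟨h.hab, h.hba⟩
  have e := h.inv a b hne (Or.inl h.a_mem)
  rw [h.fix_a, h.fix_b] at e
  have hp := h.form.1 _ _ hne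
  have : ω (para a) (para b) * (deriv F a * deriv F b - 1) = 0 := by linear_combination e
  rcases mul_eq_zero.1 this with h1 | h1
  · exact absurd h1 hp.ne'
  · linarith

lemma density_smooth (h : FixPair F a b L ω) :
    ContDiffOn ℝ (⊤ : ℕ∞) (fun t => ω (para a) (para t)) (Ioo a (a + 1)) := by
  have : (fun t => ω (para a) (para t)) = chartDensity ω ∘ fun t => (a, t) := rfl
  rw [this]
  exact h.form.2.comp (contDiff_const.prodMk contDiff_id).contDiffOn
    fun t ht => para_ne_of_mem_Ioo ht

lemma density_inv (h : FixPair F a b L ω) (t : ℝ) (ht : t ∈ Ioo a (a + 1)) :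
    ω (para a) (para (F t)) * deriv F t = deriv F b * ω (para a) (para t) := by
  have e := h.inv a t (para_ne_of_mem_Ioo ht) (Or.inl h.a_mem)
  rw [h.fix_a] at e
  rw [← e]
  linear_combination -(ω (para a) (para (F t)) * deriv F t) * h.deriv_mul

/-- The density `ω(a, ·)` is an affine structure on the circle minus `a` in which `F` is a
homothety of ratio `F'(b)`. -/
lemma chart (h : FixPair F a b L ω) (h1 : deriv F b ≠ 1) :
    Nonempty (LinChart F a b (deriv F b)) :=
  exists_linChart h.smooth h.mono h.fix_a (by rw [h.deg, h.fix_a]) h.density_smooth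
    (fun _ ht => h.form.1 _ _ (para_ne_of_mem_Ioo ht)) ⟨h.hab, h.hba⟩ h.fix_b (h.deriv_pos b) h1
    h.density_inv

/-- If the homothety is trivial then so is `F`. -/
lemma eq_id (h : FixPair F a b L ω) (h1 : deriv F b = 1) :
    ∀ t ∈ Ioo a (a + 1), F t = t := by
  have hmaps : ∀ t ∈ Ioo a (a + 1), F t ∈ Ioo a (a + 1) := by
    intro t ht
    have e1 := h.mono ht.1
    have e2 := h.mono ht.2
    rw [h.deg] at e2
    rw [h.fix_a] at e1 e2
    exact ⟨e1, e2⟩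
  obtain ⟨U, -, -, -, hU, hUF⟩ := exists_linCoord h.smooth h.density_smooth
    (fun _ ht => h.form.1 _ _ (para_ne_of_mem_Ioo ht)) ⟨h.hab, h.hba⟩ h.fix_b hmaps h.density_inv
  intro t ht
  refine hU.injOn (hmaps t ht) ht ?_
  rw [hUF t ht, h1, one_mul]

end FixPair

/-! ### The invariant form -/

/-- A smooth function on the circle equal to `1` near `a` and to `0` near `b`. -/
lemma exists_cutoff {a b : ℝ} (hab : a < b) (hba : b < a + 1) :
    ∃ θ : RP1 → ℝ, ContDiff ℝ (⊤ : ℕ∞) (fun t => θ (para t)) ∧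
      (∀ᶠ t in nhds a, θ (para t) = 1) ∧ ∀ᶠ t in nhds b, θ (para t) = 0 := by
  let c := sin (π * (b - a)) ^ 2
  have hc : 0 < c := by
    have : 0 < sin (π * (b - a)) := by
      apply sin_pos_of_pos_of_lt_pi
      · have := pi_pos
        have : 0 < b - a := by linarith
        positivity
      · nlinarith [pi_pos]
    positivity
  let S : ℝ → ℝ := fun t => 3 * (sin (π * (t - a)) ^ 2 / c) - 1
  have hS : ContDiff ℝ (⊤ : ℕ∞) S := by
    have : ContDiff ℝ (⊤ : ℕ∞) fun t : ℝ => sin (π * (t - a)) :=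
      contDiff_sin.comp (contDiff_const.mul (contDiff_id.sub contDiff_const))
    exact (contDiff_const.mul ((this.pow 2).div_const c)).sub contDiff_const
  have hper : ∀ (s t : ℝ), para s = para t → S s = S t := by
    intro s t hst
    obtain ⟨k, rfl⟩ := para_eq_iff.1 hst
    have e : sin (π * (t + k - a)) = sin (π * (t - a) + k * π) := by congr 1; ring
    simp only [S]
    rw [e, sin_add_int_mul_pi, mul_pow]
    have : ((-1 : ℝ) ^ k) ^ 2 = 1 := by
      rcases Int.even_or_odd k with hk | hk
      · rw [hk.neg_one_zpow]; norm_num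
      · rw [hk.neg_one_zpow]; norm_num
    rw [this, one_mul]
  let θ : RP1 → ℝ := fun x => 1 - smoothTransition (S (invFun para x))
  have hθ : ∀ t, θ (para t) = 1 - smoothTransition (S t) := fun t => by
    simp only [θ]
    rw [hper _ t (invFun_eq ⟨t, rfl⟩)]
  refine ⟨θ, ?_, ?_, ?_⟩
  · simp only [hθ]
    exact contDiff_const.sub (smoothTransition.contDiff.comp hS)
  · have h0 : S a < 0 := by simp [S]
    filter_upwards [hS.continuous.continuousAt.eventually_lt_const h0] with t ht
    rw [hθ, smoothTransition.zero_of_nonpos ht.le, sub_zero]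
  · have h0 : 1 < S b := by
      have : S b = 3 * (c / c) - 1 := rfl
      rw [this, div_self hc.ne']
      norm_num
    filter_upwards [hS.continuous.continuousAt.eventually_const_lt h0] with t ht
    rw [hθ, smoothTransition.one_of_one_le ht.le, sub_self]

/-- Existence of an invariant form, when `b` is attracting: writing it as `ω · exp σ`, the function
`σ` has to solve a cohomological equation `σ ∘ (f × f) = σ + φ`. Cutting `φ` into a piece vanishing
near `b` and a piece vanishing near `a`, the first is summed over forward orbits and the second over
backward orbits. -/
lemma exists_form_of_lt {f g : RP1 → RP1} {F G : ℝ → ℝ} {a b : ℝ} {L : Set RP1}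
    {ω : RP1 → RP1 → ℝ} (hL : Preperfect L) (h : FixPair F a b L ω) (h1 : deriv F b < 1)
    (hlf : IsLift F f) (hlg : IsLift G g) (hG : ContDiff ℝ (⊤ : ℕ∞) G)
    (hGF : ∀ t, G (F t) = t) (hFG : ∀ t, F (G t) = t)
    (hgf : ∀ x, g (f x) = x) (hfg : ∀ x, f (g x) = x)
    (hfL : ∀ x ∈ L, f x ∈ L) (hgL : ∀ x ∈ L, g x ∈ L) :
    ∃ ω' : RP1 → RP1 → ℝ, IsVolumeForm (⊤ : ℕ∞) ω' ∧ PreservesForm f ω' ∧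
      ∀ x y, x ≠ y → (x ∈ L ∨ y ∈ L) → ω' x y = ω x y := by
  have hG' : FixPair G a b L ω := h.inverse hG hGF hFG fun t ht => by
    rw [← hlg t]; exact hgL _ ht
  have hfi : Injective f := LeftInverse.injective hgf
  have hgi : Injective g := LeftInverse.injective hfg
  have hb0 := h.deriv_pos b
  have ha0 := h.deriv_pos a
  have hinva : deriv F a = (deriv F b)⁻¹ := eq_inv_of_mul_eq_one_left h.deriv_mul
  have hGa : deriv G a = deriv F b := by
    have e := h.deriv_mul_inverse hG hGF a
    rw [h.fix_a] at e
    rw [eq_inv_of_mul_eq_one_left e, hinva, inv_inv]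
  have hGb : deriv G b = (deriv F b)⁻¹ := by
    have e := h.deriv_mul_inverse hG hGF b
    rw [h.fix_b] at e
    exact eq_inv_of_mul_eq_one_left e
  have hinv1 : (deriv F b)⁻¹ ≠ 1 := by
    rw [Ne, inv_eq_one]; exact h1.ne
  obtain ⟨A⟩ := h.chart h1.ne
  obtain ⟨B⟩ := h.rot.chart (by rw [hinva]; exact hinv1)
  obtain ⟨A'⟩ := hG'.rot.chart (by rw [hGa]; exact h1.ne)
  obtain ⟨B'⟩ := hG'.rot.rot.chart (by rw [hG'.deriv_sub, hGb]; exact hinv1)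
  rw [hinva] at B
  rw [hGa] at A'
  rw [hG'.deriv_sub, hGb] at B'
  have hD : ∀ t, circleDeriv f (para t) = deriv F t :=
    circleDeriv_para hlf h.differentiable (Or.inl h.deg)
  have hDpos : ∀ x, 0 < circleDeriv f x := fun x => by
    obtain ⟨t, rfl⟩ := para_surjective x
    rw [hD]; exact h.deriv_pos t
  have hfne : ∀ {x y}, x ≠ y → f x ≠ f y := fun hxy e => hxy (hfi e)
  let φ : RP1 → RP1 → ℝ := fun x y =>
    log (ω x y) - log (ω (f x) (f y)) - log (circleDeriv f x) - log (circleDeriv f y)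
  have hφs : ContDiffOn ℝ (⊤ : ℕ∞) (chartDensity φ) offDiag2 := by
    have hdF : ContDiff ℝ (⊤ : ℕ∞) (deriv F) :=
      (contDiff_infty_iff_deriv.1 h.smooth).2
    have hlog : ContDiff ℝ (⊤ : ℕ∞) fun t => log (deriv F t) :=
      hdF.log fun t => (h.deriv_pos t).ne'
    have e : chartDensity φ = fun q : ℝ × ℝ => log (chartDensity ω q) -
        log ((chartDensity ω ∘ fun q : ℝ × ℝ => (F q.1, F q.2)) q) - log (deriv F q.1) -
        log (deriv F q.2) := by
      ext q
      simp only [φ, chartDensity, comp_apply, hD, hlf q.1, hlf q.2]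
    rw [e]
    have hmaps : MapsTo (fun q : ℝ × ℝ => (F q.1, F q.2)) offDiag2 offDiag2 := fun q hq => by
      show para (F q.1) ≠ para (F q.2)
      rw [← hlf, ← hlf]
      exact hfne hq
    refine (((h.form.2.log ?_).sub (ContDiffOn.log (h.form.2.comp ?_ hmaps) ?_)).sub
      (hlog.comp contDiff_fst).contDiffOn).sub (hlog.comp contDiff_snd).contDiffOn
    · exact fun q hq => (h.form.1 _ _ hq).ne'
    · exact ((h.smooth.comp contDiff_fst).prodMk (h.smooth.comp contDiff_snd)).contDiffOn
    · exact fun q hq => (h.form.1 _ _ (hmaps hq)).ne'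
  have hφe : ∀ x y, x ≠ y → exp (φ x y) =
      ω x y / (ω (f x) (f y) * circleDeriv f x * circleDeriv f y) := by
    intro x y hxy
    have e1 := h.form.1 _ _ hxy
    have e2 := h.form.1 _ _ (hfne hxy)
    simp only [φ]
    rw [exp_sub, exp_sub, exp_sub, exp_log e1, exp_log e2, exp_log (hDpos x), exp_log (hDpos y),
      div_div, div_div]
    ring
  have hφL : ∀ x y, x ≠ y → (x ∈ L ∨ y ∈ L) → φ x y = 0 := by
    intro x y hxy hm
    have e := hφe x y hxy
    have e2 : ω (f x) (f y) * circleDeriv f x * circleDeriv f y = ω x y := by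
      obtain ⟨s, rfl⟩ := para_surjective x
      obtain ⟨t, rfl⟩ := para_surjective y
      rw [hD, hD, hlf, hlf]
      exact h.inv s t hxy hm
    rw [e2, div_self (h.form.1 _ _ hxy).ne', exp_eq_one_iff] at e
    exact e
  obtain ⟨θ, hθs, hθa, hθb⟩ := exists_cutoff h.hab h.hba
  let ψ₁ : RP1 → RP1 → ℝ := fun x y => θ y * φ x y
  let ψ₂ : RP1 → RP1 → ℝ := fun x y => (1 - θ y) * φ x y
  have hψ₁s : ContDiffOn ℝ (⊤ : ℕ∞) (chartDensity ψ₁) offDiag2 :=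
    (hθs.comp contDiff_snd).contDiffOn.mul hφs
  have hψ₂s : ContDiffOn ℝ (⊤ : ℕ∞) (chartDensity ψ₂) offDiag2 :=
    (contDiff_const.sub (hθs.comp contDiff_snd)).contDiffOn.mul hφs
  have hψ₁L : ∀ x y, x ≠ y → (x ∈ L ∨ y ∈ L) → ψ₁ x y = 0 := fun x y hxy hm => by
    simp only [ψ₁, hφL x y hxy hm, mul_zero]
  have hψ₂L : ∀ x y, x ≠ y → (x ∈ L ∨ y ∈ L) → ψ₂ x y = 0 := fun x y hxy hm => by
    simp only [ψ₂, hφL x y hxy hm, mul_zero]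
  obtain ⟨s1, e1⟩ := half_solution hlf hfi h.smooth h.hab h.hba hb0 h1 A B hL h.a_mem h.b_mem hfL
    hψ₁s hψ₁L (by filter_upwards [hθb] with t ht x; simp only [ψ₁, ht, zero_mul])
  obtain ⟨s2, e2⟩ := half_solution hlg hgi hG h.rot.hab h.rot.hba hb0 h1 A' B' hL h.rot.a_mem
    h.rot.b_mem hgL hψ₂s hψ₂L
    (by filter_upwards [hθa] with t ht x; simp only [ψ₂, ht, sub_self, zero_mul])
  set σ₁ : RP1 → RP1 → ℝ := fun x y => ∑' n, ψ₁ (f^[n] x) (f^[n] y) with hσ₁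
  set σ₂ : RP1 → RP1 → ℝ := fun x y => ∑' n, ψ₂ (g^[n] x) (g^[n] y) with hσ₂
  have hvan : ∀ (k : RP1 → RP1) (ψ : RP1 → RP1 → ℝ), Injective k → (∀ x ∈ L, k x ∈ L) →
      (∀ x y, x ≠ y → (x ∈ L ∨ y ∈ L) → ψ x y = 0) → ∀ x y, x ≠ y → (x ∈ L ∨ y ∈ L) →
      ∑' n, ψ (k^[n] x) (k^[n] y) = 0 := by
    intro k ψ hk hkL hψ x y hxy hm
    have hit : ∀ n, ∀ x ∈ L, k^[n] x ∈ L := fun n => (show MapsTo k L L from hkL).iterate n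
    have : ∀ n, ψ (k^[n] x) (k^[n] y) = 0 := fun n =>
      hψ _ _ (fun e => hxy (hk.iterate n e)) (hm.imp (hit n x) (hit n y))
    simp only [this, tsum_zero]
  let σ : RP1 → RP1 → ℝ := fun x y => σ₂ x y - σ₁ x y - ψ₂ x y
  have hσs : ContDiffOn ℝ (⊤ : ℕ∞) (chartDensity σ) offDiag2 := (s2.sub s1).sub hψ₂s
  have hσf : ∀ x y, x ≠ y → σ (f x) (f y) = σ x y + φ x y := by
    intro x y hxy
    have a1 : σ₁ x y = ψ₁ x y + σ₁ (f x) (f y) := e1 x y hxy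
    have a2 : σ₂ (f x) (f y) = ψ₂ (f x) (f y) + σ₂ (g (f x)) (g (f y)) :=
      e2 _ _ (hfne hxy)
    rw [hgf, hgf] at a2
    have a3 : ψ₁ x y + ψ₂ x y = φ x y := by simp only [ψ₁, ψ₂]; ring
    simp only [σ]
    linarith
  refine ⟨fun x y => ω x y * exp (σ x y), ⟨fun x y hxy => ?_, ?_⟩, ?_, ?_⟩
  · exact mul_pos (h.form.1 _ _ hxy) (exp_pos _)
  · exact h.form.2.mul hσs.exp
  · intro x y hxy
    have p1 := (h.form.1 _ _ (hfne hxy)).ne'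
    have p2 := (hDpos x).ne'
    have p3 := (hDpos y).ne'
    show ω (f x) (f y) * exp (σ (f x) (f y)) * _ * _ = _
    rw [hσf x y hxy, exp_add, hφe x y hxy]
    field_simp
  · intro x y hxy hm
    have : σ x y = 0 := by
      simp only [σ, hσ₁, hσ₂, hvan f ψ₁ hfi hfL hψ₁L x y hxy hm,
        hvan g ψ₂ hgi hgL hψ₂L x y hxy hm, hψ₂L x y hxy hm, sub_self]
    simp only [this, exp_zero, mul_one]

lemma exists_form {f g : RP1 → RP1} {F G : ℝ → ℝ} {a b : ℝ} {L : Set RP1}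
    {ω : RP1 → RP1 → ℝ} (hL : Preperfect L) (h : FixPair F a b L ω)
    (hid : ∃ t ∈ Ioo a (a + 1), F t ≠ t)
    (hlf : IsLift F f) (hlg : IsLift G g) (hG : ContDiff ℝ (⊤ : ℕ∞) G)
    (hGF : ∀ t, G (F t) = t) (hFG : ∀ t, F (G t) = t)
    (hgf : ∀ x, g (f x) = x) (hfg : ∀ x, f (g x) = x)
    (hfL : ∀ x ∈ L, f x ∈ L) (hgL : ∀ x ∈ L, g x ∈ L) :
    ∃ ω' : RP1 → RP1 → ℝ, IsVolumeForm (⊤ : ℕ∞) ω' ∧ PreservesForm f ω' ∧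
      ∀ x y, x ≠ y → (x ∈ L ∨ y ∈ L) → ω' x y = ω x y := by
  rcases lt_trichotomy (deriv F b) 1 with h1 | h1 | h1
  · exact exists_form_of_lt hL h h1 hlf hlg hG hGF hFG hgf hfg hfL hgL
  · obtain ⟨t, ht, hne⟩ := hid
    exact absurd (h.eq_id h1 t ht) hne
  · refine exists_form_of_lt hL h.rot ?_ hlf hlg hG hGF hFG hgf hfg hfL hgL
    rw [eq_inv_of_mul_eq_one_left h.deriv_mul]
    exact inv_lt_one_of_one_lt₀ h1

/-! ### Gaps of the limit set -/

/-- A component of the complement of a perfect set lifts to an interval of length less than `1`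
with end points over the set. -/
lemma exists_gap {L : Set RP1} (hLc : IsClosed L) (hL : Preperfect L) (hLn : L.Nonempty) {t₀ : ℝ}
    (ht₀ : para t₀ ∉ L) : ∃ a b : ℝ, a < t₀ ∧ t₀ < b ∧ b < a + 1 ∧ para a ∈ L ∧ para b ∈ L ∧
      ∀ t ∈ Ioo a b, para t ∉ L := by
  have hcl : IsClosed (para ⁻¹' L) := hLc.preimage continuous_para
  obtain ⟨x, hx⟩ := hLn
  obtain ⟨s, rfl⟩ := para_surjective x
  have hne : para s ≠ para t₀ := fun e => ht₀ (e ▸ hx)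
  obtain ⟨k, hk⟩ := exists_shift hne
  set s' := s - k with hs'
  have hs'L : para s' ∈ L := by
    rwa [show para s' = para s from para_eq_iff.2 ⟨-k, by rw [hs']; push_cast; ring⟩]
  have hbdd1 : BddAbove (para ⁻¹' L ∩ Iic t₀) := ⟨t₀, fun _ h => h.2⟩
  have hbdd2 : BddBelow (para ⁻¹' L ∩ Ici t₀) := ⟨t₀, fun _ h => h.2⟩
  have hs1 : s' - 1 ∈ para ⁻¹' L ∩ Iic t₀ :=
    ⟨by rw [mem_preimage, para_sub_one]; exact hs'L, by rw [mem_Iic]; linarith [hk.2]⟩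
  have hs2 : s' ∈ para ⁻¹' L ∩ Ici t₀ := ⟨hs'L, hk.1.le⟩
  set a := sSup (para ⁻¹' L ∩ Iic t₀) with ha
  set b := sInf (para ⁻¹' L ∩ Ici t₀) with hb
  have ham : a ∈ para ⁻¹' L ∩ Iic t₀ := (hcl.inter isClosed_Iic).csSup_mem ⟨_, hs1⟩ hbdd1
  have hbm : b ∈ para ⁻¹' L ∩ Ici t₀ := (hcl.inter isClosed_Ici).csInf_mem ⟨_, hs2⟩ hbdd2
  have hat : a < t₀ := lt_of_le_of_ne ham.2 fun e => ht₀ (e ▸ ham.1)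
  have htb : t₀ < b := lt_of_le_of_ne hbm.2 fun e => ht₀ (e ▸ hbm.1)
  have hgap : ∀ t ∈ Ioo a b, para t ∉ L := by
    intro t ht htL
    rcases le_total t t₀ with h | h
    · exact absurd (le_csSup hbdd1 ⟨htL, h⟩) (not_le.2 ht.1)
    · exact absurd (csInf_le hbdd2 ⟨htL, h⟩) (not_le.2 ht.2)
  have hle : b ≤ a + 1 := by
    have h1 : s' - 1 ≤ a := le_csSup hbdd1 hs1
    refine csInf_le hbdd2 ⟨?_, ?_⟩
    · rw [mem_preimage, para_add_one]; exact ham.1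
    · rw [mem_Ici]; linarith [hk.1]
  refine ⟨a, b, hat, htb, lt_of_le_of_ne hle fun e => ?_, ham.1, hbm.1, hgap⟩
  -- Otherwise `L` would be the single point `para a`, which is isolated.
  obtain ⟨r, hr, hra, hrL⟩ := accPt_lift hL ham.1
    (Ioo_mem_nhds (by linarith : a - 1 < a) (by linarith : a < a + 1))
  rcases lt_or_gt_of_ne hra with h | h
  · refine hgap (r + 1) ⟨by linarith [hr.1], by linarith⟩ ?_
    rwa [para_add_one]
  · exact hgap r ⟨h, by linarith [hr.2]⟩ hrL

lemma component_subset {L : Set RP1} {a b t₀ : ℝ} (hat : a < t₀) (htb : t₀ < b)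
    (hba : b < a + 1) (ha : para a ∈ L) (hb : para b ∈ L) :
    connectedComponentIn Lᶜ (para t₀) ⊆ para '' Ioo a b := by
  by_cases hx : para t₀ ∈ Lᶜ
  swap
  · rw [connectedComponentIn_eq_empty hx]
    exact empty_subset _
  refine isPreconnected_connectedComponentIn.subset_left_of_subset_union
    (v := (para '' Icc a b)ᶜ) (isOpenMap_para _ isOpen_Ioo)
    (isCompact_Icc.image continuous_para).isClosed.isOpen_compl ?_ ?_
    ⟨para t₀, mem_connectedComponentIn hx, t₀, ⟨hat, htb⟩, rfl⟩
  · exact disjoint_compl_right.mono_left (image_mono Ioo_subset_Icc_self)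
  · intro x hxc
    have hxL := connectedComponentIn_subset _ _ hxc
    by_cases hxm : x ∈ para '' Icc a b
    · left
      obtain ⟨t, ht, rfl⟩ := hxm
      refine ⟨t, ⟨lt_of_le_of_ne ht.1 ?_, lt_of_le_of_ne ht.2 ?_⟩, rfl⟩
      · rintro rfl; exact hxL ha
      · rintro rfl; exact hxL hb
    · exact Or.inr hxm

/-- A lift of a circle diffeomorphism preserving `L` and mapping some point of a gap into the same
gap preserves the set of end points of the gap. -/
lemma endpoints_fix_or_swap {L : Set RP1} {F : ℝ → ℝ} (hF : Continuous F) (hinj : Injective F)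
    (hFL : ∀ t, para (F t) ∈ L ↔ para t ∈ L) {a b t₀ : ℝ} (hat : a < t₀) (htb : t₀ < b)
    (ha : para a ∈ L) (hb : para b ∈ L) (hgap : ∀ t ∈ Ioo a b, para t ∉ L)
    (hFt : F t₀ ∈ Ioo a b) : (F a = a ∧ F b = b) ∨ (F a = b ∧ F b = a) := by
  have hz : ∀ z, para z ∈ L → (∀ u, u = a ∨ u = b → z ∈ uIcc (F u) (F t₀) → F u = z) := by
    intro z hzL u hu hzm
    obtain ⟨s, hs, hsz⟩ := intermediate_value_uIcc hF.continuousOn hzm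
    have hsL : para s ∈ L := by rw [← hFL, hsz]; exact hzL
    have hns : s ∉ Ioo a b := fun h => hgap s h hsL
    rcases hu with rfl | rfl
    · rw [uIcc_of_le hat.le] at hs
      rcases hs.1.lt_or_eq with h | h
      · exact absurd ⟨h, hs.2.trans_lt htb⟩ hns
      · rw [h, hsz]
    · rw [uIcc_of_ge htb.le] at hs
      rcases hs.2.lt_or_eq with h | h
      · exact absurd ⟨hat.trans_le hs.1, h⟩ hns
      · rw [← h, hsz]
  have hab : ∀ u, u = a ∨ u = b → F u = a ∨ F u = b := by
    intro u hu
    have huL : para u ∈ L := by rcases hu with rfl | rfl <;> assumption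
    have hn : F u ∉ Ioo a b := fun h => hgap _ h ((hFL u).2 huL)
    rcases le_or_gt (F u) a with h | h
    · left
      exact hz a ha u hu (by rw [uIcc_of_le (h.trans hFt.1.le)]; exact ⟨h, hFt.1.le⟩)
    · have h' : b ≤ F u := not_lt.1 fun h' => hn ⟨h, h'⟩
      right
      exact hz b hb u hu (by rw [uIcc_of_ge (hFt.2.le.trans h')]; exact ⟨hFt.2.le, h'⟩)
  have hne : F a ≠ F b := fun e => by linarith [hinj e]
  rcases hab a (Or.inl rfl) with h1 | h1 <;> rcases hab b (Or.inr rfl) with h2 | h2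
  · exact absurd (h1.trans h2.symm) hne
  · exact Or.inl ⟨h1, h2⟩
  · exact Or.inr ⟨h1, h2⟩
  · exact absurd (h1.trans h2.symm) hne

lemma injective_of_deriv_ne_zero {F : ℝ → ℝ} (hF : Continuous F) (hd : ∀ t, deriv F t ≠ 0) :
    Injective F := by
  have key : ∀ s t, s < t → F s ≠ F t := fun s t hst e => by
    obtain ⟨c, -, hc⟩ := exists_deriv_eq_zero hst hF.continuousOn e
    exact hd c hc
  intro s t e
  rcases lt_trichotomy s t with h | h | h
  · exact absurd e (key s t h)
  · exact h
  · exact absurd e.symm (key t s h)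

lemma deriv_pos_of_two_fixed {F : ℝ → ℝ} (hF : ContDiff ℝ (⊤ : ℕ∞) F) (hd : ∀ t, deriv F t ≠ 0)
    {a b : ℝ} (hab : a < b) (ha : F a = a) (hb : F b = b) (t : ℝ) : 0 < deriv F t := by
  obtain ⟨c, -, hc⟩ := exists_deriv_eq_slope F hab hF.continuous.continuousOn
    (hF.differentiable (by simp)).differentiableOn
  rw [ha, hb, div_self (by linarith)] at hc
  by_contra hn
  obtain ⟨s, hs⟩ := mem_range_of_exists_le_of_exists_ge
    (contDiff_infty_iff_deriv.1 hF).2.continuous ⟨t, not_lt.1 hn⟩ ⟨c, by rw [hc]; exact zero_le_one⟩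
  exact hd s hs

/-- Existence of an invariant form on the whole cylinder. -/
lemma exists_global_form {Γ : Type*} [Group Γ] (ρ₀ ρ₁ : Γ →* Equiv.Perm RP1)
    (hcc : IsConvexCocompact ρ₀)
    (L : Set RP1) (hL : IsLimitSet ρ₀ L)
    (h : RP1 ≃ₜ RP1) (hid : ∀ x ∈ L, h x = x)
    (hconj : ∀ (γ : Γ) (x : RP1), ρ₁ γ x = h (ρ₀ γ (h.symm x)))
    (hdiff : ∀ γ : Γ, IsCircleDiffeo (⊤ : ℕ∞) (ρ₁ γ))
    (ω₂ : RP1 → RP1 → ℝ) (hω₂ : IsVolumeForm (⊤ : ℕ∞) ω₂)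
    (hinv : ∀ (γ : Γ) (x y : RP1), x ≠ y → (x ∈ L ∨ y ∈ L) →
      ω₂ (ρ₁ γ x) (ρ₁ γ y) * circleDeriv (ρ₁ γ) x * circleDeriv (ρ₁ γ) y = ω₂ x y)
    (x₀ : RP1) (hx₀ : x₀ ∉ L) (γ₀ : Γ)
    (hstab : ρ₁ γ₀ '' connectedComponentIn Lᶜ x₀ = connectedComponentIn Lᶜ x₀) :
    ∃ ω : RP1 → RP1 → ℝ, IsVolumeForm (⊤ : ℕ∞) ω ∧ PreservesForm (ρ₁ γ₀) ω ∧
      ∀ x y, x ≠ y → (x ∈ L ∨ y ∈ L) → ω x y = ω₂ x y := by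
  by_cases hγ : γ₀ = 1
  · subst hγ
    refine ⟨ω₂, hω₂, fun x y hxy => ?_, fun _ _ _ _ => rfl⟩
    have hD : ∀ x, circleDeriv (ρ₁ 1) x = 1 := by
      intro x
      obtain ⟨t, rfl⟩ := para_surjective x
      rw [circleDeriv_para (F := id) (fun t => by simp) differentiable_id
        (Or.inl fun t => rfl)]
      simp
    rw [hD, hD, mul_one, mul_one, map_one, Equiv.Perm.one_apply, Equiv.Perm.one_apply]
  have hperf : Preperfect L := (hcc.2.2.2.2.1 L hL).2.1.acc
  obtain ⟨hLn, hLc, hLi, -⟩ := hL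
  have hsymm : ∀ x ∈ L, h.symm x = x := fun x hx => by
    conv_lhs => rw [← hid x hx]
    exact h.symm_apply_apply x
  have h0L : ∀ γ, ∀ x ∈ L, ρ₀ γ x ∈ L := fun γ x hx => by
    rw [← hLi γ]; exact mem_image_of_mem _ hx
  have h01 : ∀ γ, ∀ x ∈ L, ρ₁ γ x = ρ₀ γ x := fun γ x hx => by
    rw [hconj, hsymm x hx, hid _ (h0L γ x hx)]
  have h1L : ∀ γ, ∀ x ∈ L, ρ₁ γ x ∈ L := fun γ x hx => by
    rw [h01 γ x hx]; exact h0L γ x hx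
  have hgf : ∀ x, ρ₁ γ₀⁻¹ (ρ₁ γ₀ x) = x := fun x => by simp
  have hfg : ∀ x, ρ₁ γ₀ (ρ₁ γ₀⁻¹ x) = x := fun x => by simp
  obtain ⟨M, hM⟩ := hcc.2.1 γ₀
  have hfix0 : ∀ x, ρ₁ γ₀ x = x → mobius M (h.symm x) = h.symm x := fun x hx => by
    rw [← hM, Homeomorph.eq_symm_apply, ← hconj, hx]
  obtain ⟨t₀, rfl⟩ := para_surjective x₀
  obtain ⟨a, b, hat, htb, hba, ha, hb, hgap⟩ := exists_gap hLc hperf hLn hx₀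
  have hab : a < b := hat.trans htb
  have hparab : para a ≠ para b := para_ne_of_mem_Ioo ⟨hab, hba⟩
  obtain ⟨F₀, hF₀l, hF₀s, hF₀d, hF₀deg⟩ := hdiff γ₀
  have hmem : ρ₁ γ₀ (para t₀) ∈ para '' Ioo a b := by
    apply component_subset hat htb hba ha hb
    rw [← hstab]
    exact mem_image_of_mem _ (mem_connectedComponentIn hx₀)
  obtain ⟨s, hs, hse⟩ := hmem
  rw [hF₀l] at hse
  obtain ⟨k, hk⟩ := para_eq_iff.1 hse.symm
  -- The lift that maps the chosen lift of the gap to itself.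
  set F : ℝ → ℝ := fun t => F₀ t - k with hFdef
  have hFl : IsLift F (ρ₁ γ₀) := fun t => by
    rw [hF₀l]; exact para_eq_iff.2 ⟨k, by rw [hFdef]; ring⟩
  have hFs : ContDiff ℝ (⊤ : ℕ∞) F := hF₀s.sub contDiff_const
  have hFd : ∀ t, deriv F t ≠ 0 := fun t => by
    rw [hFdef, deriv_sub_const]; exact hF₀d t
  have hFdeg : (∀ t : ℝ, F (t + 1) = F t + 1) ∨ (∀ t : ℝ, F (t + 1) = F t - 1) :=
    hF₀deg.imp (fun e t => by simp only [hFdef, e]; ring) (fun e t => by simp only [hFdef, e]; ring)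
  have hFt : F t₀ ∈ Ioo a b := by
    rw [show F t₀ = s by rw [hFdef]; simp only; linarith]; exact hs
  have hFinj := injective_of_deriv_ne_zero hFs.continuous hFd
  have hFL : ∀ t, para (F t) ∈ L ↔ para t ∈ L := fun t => by
    rw [← hFl]
    refine ⟨fun e => ?_, h1L _ _⟩
    rw [← hgf (para t)]
    exact h1L _ _ e
  rcases endpoints_fix_or_swap hFs.continuous hFinj hFL hat htb ha hb hgap hFt with
    ⟨hFa, hFb⟩ | ⟨hFa, hFb⟩
  swap
  · -- A Möbius map exchanging two points is an elliptic involution, but `F` has a fixed point.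
    exfalso
    obtain ⟨c, -, hc⟩ := intermediate_value_Icc' hab.le
      (hFs.continuous.sub continuous_id).continuousOn (show (0 : ℝ) ∈ Icc _ _ from
        ⟨by simp only [Pi.sub_apply, hFb, id]; linarith,
          by simp only [Pi.sub_apply, hFa, id]; linarith⟩)
    have hc' : F c = c := by simp only [Pi.sub_apply, id] at hc; linarith
    refine mobius_swap_no_fixed (M := M) hparab ?_ ?_ (hfix0 (para c) (by rw [hFl, hc']))
    · rw [← hM, ← h01 _ _ ha, hFl, hFa]
    · rw [← hM, ← h01 _ _ hb, hFl, hFb]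
  have hFpos := deriv_pos_of_two_fixed hFs hFd hab hFa hFb
  have hdeg : ∀ t, F (t + 1) = F t + 1 := by
    rcases hFdeg with e | e
    · exact e
    · have := strictMono_of_deriv_pos hFpos (lt_add_one a)
      rw [e] at this
      linarith
  have hD : ∀ t, circleDeriv (ρ₁ γ₀) (para t) = deriv F t :=
    circleDeriv_para hFl (hFs.differentiable (by simp)) (Or.inl hdeg)
  have hP : FixPair F a b L ω₂ := by
    refine ⟨hFs, hFpos, hdeg, hab, hba, hFa, hFb, ha, hb, hω₂, fun s t hst hm => ?_⟩
    rw [← hFl, ← hFl, ← hD, ← hD]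
    exact hinv γ₀ _ _ hst hm
  obtain ⟨G₀, hG₀l, hG₀s, -, -⟩ := hdiff γ₀⁻¹
  obtain ⟨m, hm⟩ := exists_int_const (hG₀s.continuous.comp hFs.continuous) continuous_id
    (fun t => by rw [comp_apply, ← hG₀l, ← hFl, hgf]; rfl)
  set G : ℝ → ℝ := fun t => G₀ t - m with hGdef
  have hGs : ContDiff ℝ (⊤ : ℕ∞) G := hG₀s.sub contDiff_const
  have hGl : IsLift G (ρ₁ γ₀⁻¹) := fun t => by
    rw [hG₀l]; exact para_eq_iff.2 ⟨m, by rw [hGdef]; ring⟩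
  have hGF : ∀ t, G (F t) = t := fun t => by
    have := hm t
    simp only [comp_apply, id] at this
    simp only [hGdef]
    linarith
  have hFG : ∀ t, F (G t) = t := by
    obtain ⟨n, hn⟩ := exists_int_const (hFs.continuous.comp hGs.continuous) continuous_id
      (fun t => by rw [comp_apply, ← hFl, ← hGl, hfg]; rfl)
    simp only [comp_apply, id] at hn
    have hGa : G a = a := by
      conv_lhs => rw [← hFa]
      exact hGF a
    have e := hn a
    rw [hGa, hFa] at e
    intro t
    rw [hn t]
    linarith
  refine exists_form hperf hP ⟨t₀, ⟨hat, htb.trans hba⟩, fun e => hγ ?_⟩ hFl hGl hGs hGF hFG hgf hfg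
    (h1L _) (h1L _)
  -- Three fixed points force the Möbius map to be the identity.
  have hnot : ∀ x ∈ L, x ≠ h.symm (para t₀) := fun x hx ex => by
    rw [Homeomorph.eq_symm_apply, hid x hx] at ex
    exact hx₀ (ex ▸ hx)
  apply hcc.1
  rw [map_one]
  ext1 x
  rw [hM]
  refine mobius_eq_id_of_three hparab (hnot _ ha) (hnot _ hb) ?_ ?_
    (hfix0 _ (by rw [hFl, e])) x
  · rw [← hM, ← h01 _ _ ha, hFl, hFa]
  · rw [← hM, ← h01 _ _ hb, hFl, hFb]

/-- Extension to vertical strips: with `ρ₀` convex cocompact, `ρ₁ = h ρ₀ h⁻¹` as in the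
main theorem, and `ω₂` a smooth volume form invariant at points of `(L×S¹ ∪ S¹×L) \ Δ`,
for every connected component `I` of `S¹ \ L` with stabilizer generated by `γ₀` there is
a smooth volume form on `Ī×S¹ \ Δ`, invariant under `ρ₁(γ₀)`, agreeing with `ω₂` on
`(L×S¹ ∪ S¹×L)` there. -/
theorem stmt_16 {Γ : Type*} [Group Γ] (ρ₀ ρ₁ : Γ →* Equiv.Perm RP1)
    (hcc : IsConvexCocompact ρ₀)
    (L : Set RP1) (hL : IsLimitSet ρ₀ L)
    (h : RP1 ≃ₜ RP1) (hid : ∀ x ∈ L, h x = x)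
    (hconj : ∀ (γ : Γ) (x : RP1), ρ₁ γ x = h (ρ₀ γ (h.symm x)))
    (hdiff : ∀ γ : Γ, IsCircleDiffeo (⊤ : ℕ∞) (ρ₁ γ))
    (ω₂ : RP1 → RP1 → ℝ) (hω₂ : IsVolumeForm (⊤ : ℕ∞) ω₂)
    (hinv : ∀ (γ : Γ) (x y : RP1), x ≠ y → (x ∈ L ∨ y ∈ L) →
      ω₂ (ρ₁ γ x) (ρ₁ γ y) * circleDeriv (ρ₁ γ) x * circleDeriv (ρ₁ γ) y = ω₂ x y)
    (I : Set RP1) (x₀ : RP1) (hx₀ : x₀ ∉ L) (hI : I = connectedComponentIn Lᶜ x₀)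
    (γ₀ : Γ) (hstab : ∀ δ : Γ, (ρ₁ δ) '' I = I ↔ δ ∈ Subgroup.zpowers γ₀) :
    ∃ ω : RP1 → RP1 → ℝ,
      (∀ x y : RP1, x ∈ closure I → x ≠ y → 0 < ω x y) ∧
      ContDiffOn ℝ (⊤ : ℕ∞) (chartDensity ω)
        {q : ℝ × ℝ | para q.1 ∈ closure I ∧ para q.1 ≠ para q.2} ∧
      (∀ x y : RP1, x ∈ closure I → x ≠ y →
        ω (ρ₁ γ₀ x) (ρ₁ γ₀ y) * circleDeriv (ρ₁ γ₀) x * circleDeriv (ρ₁ γ₀) y = ω x y) ∧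
      (∀ x y : RP1, x ∈ closure I → x ≠ y → (x ∈ L ∨ y ∈ L) → ω x y = ω₂ x y) := by
  subst hI
  obtain ⟨ω, hω, hpres, hag⟩ := exists_global_form ρ₀ ρ₁ hcc L hL h hid hconj hdiff ω₂ hω₂ hinv
    x₀ hx₀ γ₀ ((hstab γ₀).2 (Subgroup.mem_zpowers γ₀))
  exact ⟨ω, fun x y _ => hω.1 x y, hω.2.mono fun _ hq => hq.2, fun x y _ => hpres x y,
    fun x y _ => hag x y⟩

end
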